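/- arXiv:1204.3778 — 14 statements merged into one kernel-verified Lean document; each statement's English description precedes it below -/
import Mathlib

section
/- Suppose Ω is nonempty, connected and simply connected. Then there exists a smooth function g : Ω → ℝ such that g_s(s,t) = [x_s(s,t), c(s,t)] and g_t(s,t) = [x_t(s,t), c(s,t)] for all (s,t) ∈ Ω. -/
noncomputable section

/-- `det2 u v` is the determinant of the 2×2 matrix with columns `u` and `v`. -/
def det2 (u v : ℝ × ℝ) : ℝ := u.1 * v.2 - u.2 * v.1

/-- Partial derivative with respect to the first coordinate `s`. -/
def pds (f : ℝ × ℝ → ℝ) (p : ℝ × ℝ) : ℝ := fderiv ℝ f p (1, 0)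

/-- Partial derivative with respect to the second coordinate `t`. -/
def pdt (f : ℝ × ℝ → ℝ) (p : ℝ × ℝ) : ℝ := fderiv ℝ f p (0, 1)

/-- The planar map `x = (A, B)`. -/
def xmap (A B : ℝ × ℝ → ℝ) (p : ℝ × ℝ) : ℝ × ℝ := (A p, B p)

/-- The conjugate map `c = (-D, C)`. -/
def cmap (C D : ℝ × ℝ → ℝ) (p : ℝ × ℝ) : ℝ × ℝ := (-D p, C p)

/-- `x_s = (A_s, B_s)`. -/
def xs (A B : ℝ × ℝ → ℝ) (p : ℝ × ℝ) : ℝ × ℝ := (pds A p, pds B p)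

/-- `x_t = (A_t, B_t)`. -/
def xt (A B : ℝ × ℝ → ℝ) (p : ℝ × ℝ) : ℝ × ℝ := (pdt A p, pdt B p)

/-- `δ = A_s B_t - A_t B_s = [x_s, x_t]`. -/
def deltaMap (A B : ℝ × ℝ → ℝ) (p : ℝ × ℝ) : ℝ :=
  pds A p * pdt B p - pdt A p * pds B p

/-- The real line with the discrete topology (wrapped). -/
structure DiscR where
  val : ℝ

instance : TopologicalSpace DiscR := ⊥

instance : DiscreteTopology DiscR := ⟨rfl⟩

/-- The bundle of local primitives. -/
def primCore {X : Type} [TopologicalSpace X] (U : X → Set X) (hU : ∀ i, IsOpen (U i))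
    (hm : ∀ i, i ∈ U i) (f : X → X → ℝ)
    (hf : ∀ i j, ∀ y ∈ U i ∩ U j, ∀ᶠ z in nhds y, f i z - f j z = f i y - f j y) :
    FiberBundleCore X X DiscR where
  baseSet := U
  isOpen_baseSet := hU
  indexAt := id
  mem_baseSet_at := hm
  coordChange i j y v := ⟨v.val + (f i y - f j y)⟩
  coordChange_self i x _ v := by simp
  continuousOn_coordChange i j := by
    rintro ⟨y, v⟩ ⟨hy, -⟩
    apply ContinuousAt.continuousWithinAt
    have h1 : ∀ᶠ p : X × DiscR in nhds (y, v), f i p.1 - f j p.1 = f i y - f j y :=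
      (continuous_fst.tendsto (y, v)).eventually (hf i j y hy)
    have h2 : ∀ᶠ p : X × DiscR in nhds (y, v), p.2 = v := by
      have : ∀ᶠ w in nhds v, w = v := by simp
      exact (continuous_snd.tendsto (y, v)).eventually this
    refine (continuousAt_const (y := (⟨v.val + (f i y - f j y)⟩ : DiscR))).congr ?_
    filter_upwards [h1, h2] with p hp1 hp2
    rw [hp1, hp2]
  coordChange_comp i j k x _ v := by
    congr 1
    ring

theorem exists_global_of_local {X : Type} [TopologicalSpace X] [SimplyConnectedSpace X]
    [LocallyPathConnectedSpace X] (U : X → Set X) (hU : ∀ i, IsOpen (U i))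
    (hm : ∀ i, i ∈ U i) (f : X → X → ℝ)
    (hf : ∀ i j, ∀ y ∈ U i ∩ U j, ∀ᶠ z in nhds y, f i z - f j z = f i y - f j y) :
    ∃ g : X → ℝ, ∀ y, ∀ᶠ z in nhds y, g z - f y z = g y - f y y := by
  let Z := primCore U hU hm f hf
  have cov : IsCoveringMap Z.proj :=
    IsCoveringMap.mk Z.proj (fun _ => DiscR) (fun x => Z.localTriv x) (fun x => hm x)
  obtain ⟨x₀⟩ : Nonempty X := inferInstance
  obtain ⟨F, ⟨-, hF⟩, -⟩ := cov.existsUnique_continuousMap_lifts (ContinuousMap.id X) x₀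
    (⟨x₀, (⟨0⟩ : DiscR)⟩ : Z.TotalSpace) rfl
  have hF' : ∀ x, (F x).1 = x := fun x => congrFun hF x
  let s : X → DiscR := fun x => (F x).2
  refine ⟨fun x => (s x).val + f x x, fun y => ?_⟩
  have hc : ContinuousAt (fun z => (Z.localTriv y (F z)).2) y := by
    have h1 : ContinuousAt (Z.localTriv y) (F y) := by
      apply (Z.localTriv y).continuousAt
      rw [(Z.localTriv y).mem_source]
      change (F y).1 ∈ U y
      rw [hF']
      exact hm y
    exact continuous_snd.continuousAt.comp (h1.comp F.continuous.continuousAt)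
  have hval : ∀ z, (Z.localTriv y (F z)).2.val = (s z).val + (f z z - f y z) := by
    intro z
    change (s z).val + (f (F z).1 (F z).1 - f y (F z).1) = _
    rw [hF']
  have := hc.eventually (p := fun w => w = (Z.localTriv y (F y)).2) (by simp)
  filter_upwards [this] with z hz
  have h := congrArg DiscR.val hz
  rw [hval, hval] at h
  linarith

/-- Poincaré lemma for 1-forms on simply connected open sets. -/
theorem poincare_simply_connected {Ω : Set (ℝ × ℝ)} (hΩ : IsOpen Ω)
    (hsc : SimplyConnectedSpace Ω) (ω : ℝ × ℝ → ℝ × ℝ →L[ℝ] ℝ)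
    (hω : DifferentiableOn ℝ ω Ω)
    (hsym : ∀ a ∈ Ω, ∀ x y, fderiv ℝ ω a x y = fderiv ℝ ω a y x) :
    ∃ g : ℝ × ℝ → ℝ, ∀ a ∈ Ω, HasFDerivAt g (ω a) a := by
  have := hΩ.locallyPathConnectedSpace
  have hloc : ∀ i : Ω, ∃ r > 0, Metric.ball (i : ℝ × ℝ) r ⊆ Ω ∧
      ∃ f : ℝ × ℝ → ℝ, ∀ a ∈ Metric.ball (i : ℝ × ℝ) r, HasFDerivAt f (ω a) a := by
    intro i
    obtain ⟨r, hr, hrΩ⟩ := Metric.isOpen_iff.mp hΩ i i.2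
    exact ⟨r, hr, hrΩ, (convex_ball _ _).exists_forall_hasFDerivAt_of_fderiv_symmetric
      Metric.isOpen_ball (hω.mono hrΩ) fun a ha => hsym a (hrΩ ha)⟩
  choose r hr hrΩ f hf using hloc
  obtain ⟨g, hg⟩ := exists_global_of_local (X := Ω)
    (fun i => Subtype.val ⁻¹' Metric.ball (i : ℝ × ℝ) (r i))
    (fun i => Metric.isOpen_ball.preimage continuous_subtype_val)
    (fun i => Metric.mem_ball_self (hr i)) (fun i y => f i y) (by
      rintro i j y ⟨hyi, hyj⟩
      have hopen : IsOpen (Metric.ball (i : ℝ × ℝ) (r i) ∩ Metric.ball (j : ℝ × ℝ) (r j)) :=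
        Metric.isOpen_ball.inter Metric.isOpen_ball
      have hd : ∀ a ∈ Metric.ball (i : ℝ × ℝ) (r i) ∩ Metric.ball (j : ℝ × ℝ) (r j),
          HasFDerivAt (fun z => f i z - f j z) (0 : ℝ × ℝ →L[ℝ] ℝ) a := by
        intro a ha
        simpa using (hf i a ha.1).fun_sub (hf j a ha.2)
      have hmem : Subtype.val ⁻¹' (Metric.ball (i : ℝ × ℝ) (r i) ∩
          Metric.ball (j : ℝ × ℝ) (r j)) ∈ nhds y :=
        (hopen.preimage continuous_subtype_val).mem_nhds ⟨hyi, hyj⟩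
      filter_upwards [hmem] with z hz
      exact hopen.is_const_of_fderiv_eq_zero (𝕜 := ℝ) (f := fun z => f i z - f j z)
        (((convex_ball _ _).inter (convex_ball _ _)).isPreconnected)
        (fun a ha => (hd a ha).differentiableAt.differentiableWithinAt)
        (fun a ha => (hd a ha).fderiv) hz ⟨hyi, hyj⟩)
  classical
  refine ⟨fun p => if h : p ∈ Ω then g ⟨p, h⟩ else 0, fun a ha => ?_⟩
  have h1 := (hf ⟨a, ha⟩ a (Metric.mem_ball_self (hr _))).add_const
    (g ⟨a, ha⟩ - f ⟨a, ha⟩ a)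
  refine h1.congr_of_eventuallyEq ?_
  have h2 := hg ⟨a, ha⟩
  rw [nhds_subtype_eq_comap, Filter.eventually_comap] at h2
  filter_upwards [h2, hΩ.mem_nhds ha] with z hz hzΩ
  have := hz ⟨z, hzΩ⟩ rfl
  simp only [hzΩ, dite_true]
  linarith

theorem exists_generating_g
    (Ω : Set (ℝ × ℝ)) (hΩ : IsOpen Ω)
    (A B C D : ℝ × ℝ → ℝ)
    (hA : ContDiffOn ℝ (⊤ : ℕ∞) A Ω) (hB : ContDiffOn ℝ (⊤ : ℕ∞) B Ω)
    (hC : ContDiffOn ℝ (⊤ : ℕ∞) C Ω) (hD : ContDiffOn ℝ (⊤ : ℕ∞) D Ω)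
    (hCR1 : ∀ p ∈ Ω, pds A p = - pdt D p)
    (hCR2 : ∀ p ∈ Ω, pdt A p = pds D p)
    (hCR3 : ∀ p ∈ Ω, pds B p = pdt C p)
    (hCR4 : ∀ p ∈ Ω, pdt B p = - pds C p)
    (hne : Ω.Nonempty) (hconn : IsConnected Ω)
    (hsc : SimplyConnectedSpace Ω)
    :
    ∃ g : ℝ × ℝ → ℝ, ContDiffOn ℝ (⊤ : ℕ∞) g Ω ∧
      ∀ p ∈ Ω, pds g p = det2 (xs A B p) (cmap C D p) ∧
        pdt g p = det2 (xt A B p) (cmap C D p) := by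
  have top : ((⊤ : ℕ∞) : WithTop ℕ∞) ≠ 0 := by simp
  have dat : ∀ {f : ℝ × ℝ → ℝ}, ContDiffOn ℝ (⊤ : ℕ∞) f Ω → ∀ p ∈ Ω, DifferentiableAt ℝ f p :=
    fun hf p hp => (hf.differentiableOn top).differentiableAt (hΩ.mem_nhds hp)
  have cfd : ∀ {f : ℝ × ℝ → ℝ}, ContDiffOn ℝ (⊤ : ℕ∞) f Ω →
      ContDiffOn ℝ (⊤ : ℕ∞) (fderiv ℝ f) Ω :=
    fun hf => ((contDiffOn_infty_iff_fderiv_of_isOpen hΩ).mp hf).2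
  have dfd : ∀ {f : ℝ × ℝ → ℝ}, ContDiffOn ℝ (⊤ : ℕ∞) f Ω → ∀ p ∈ Ω,
      DifferentiableAt ℝ (fderiv ℝ f) p :=
    fun hf p hp => ((cfd hf).differentiableOn top).differentiableAt (hΩ.mem_nhds hp)
  have sym : ∀ {f : ℝ × ℝ → ℝ}, ContDiffOn ℝ (⊤ : ℕ∞) f Ω → ∀ p ∈ Ω, ∀ u v,
      fderiv ℝ (fderiv ℝ f) p u v = fderiv ℝ (fderiv ℝ f) p v u := by
    intro f hf p hp u v
    refine second_derivative_symmetric_of_eventually (f := f) (f' := fderiv ℝ f) (x := p) ?_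
      (dfd hf p hp).hasFDerivAt u v
    filter_upwards [hΩ.mem_nhds hp] with q hq
    exact (dat hf q hq).hasFDerivAt
  have dec : ∀ (L : ℝ × ℝ →L[ℝ] ℝ) (u : ℝ × ℝ), L u = u.1 * L (1, 0) + u.2 * L (0, 1) := by
    intro L u
    have : u = u.1 • ((1, 0) : ℝ × ℝ) + u.2 • ((0, 1) : ℝ × ℝ) := by ext <;> simp
    conv_lhs => rw [this]
    rw [map_add, map_smul, map_smul, smul_eq_mul, smul_eq_mul]
  let ω : ℝ × ℝ → ℝ × ℝ →L[ℝ] ℝ := fun p => C p • fderiv ℝ A p + D p • fderiv ℝ B p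
  have hωc : ContDiffOn ℝ (⊤ : ℕ∞) ω Ω := (hC.smul (cfd hA)).add (hD.smul (cfd hB))
  obtain ⟨g, hg⟩ := poincare_simply_connected hΩ hsc ω (hωc.differentiableOn top) (by
    intro a ha u v
    have h : HasFDerivAt ω _ a :=
      ((dat hC a ha).hasFDerivAt.smul (dfd hA a ha).hasFDerivAt).add
        ((dat hD a ha).hasFDerivAt.smul (dfd hB a ha).hasFDerivAt)
    rw [h.fderiv]
    have s1 := sym hA a ha u v
    have s2 := sym hB a ha u v
    have c1 := hCR1 a ha
    have c2 := hCR2 a ha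
    have c3 := hCR3 a ha
    have c4 := hCR4 a ha
    simp only [pds, pdt] at c1 c2 c3 c4
    simp only [ContinuousLinearMap.add_apply, ContinuousLinearMap.smul_apply,
      ContinuousLinearMap.smulRight_apply, smul_eq_mul, s1, s2]
    rw [dec (fderiv ℝ A a) u, dec (fderiv ℝ A a) v, dec (fderiv ℝ B a) u, dec (fderiv ℝ B a) v,
      dec (fderiv ℝ C a) u, dec (fderiv ℝ C a) v, dec (fderiv ℝ D a) u, dec (fderiv ℝ D a) v,
      c1, c2, c3, c4]
    ring)
  refine ⟨g, ?_, fun p hp => ?_⟩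
  · refine (contDiffOn_infty_iff_fderiv_of_isOpen hΩ).mpr
      ⟨fun p hp => (hg p hp).differentiableAt.differentiableWithinAt, ?_⟩
    exact hωc.congr fun p hp => (hg p hp).fderiv
  · constructor
    · simp only [pds, (hg p hp).fderiv, det2, xs, cmap, ω, ContinuousLinearMap.add_apply,
        ContinuousLinearMap.smul_apply, smul_eq_mul]
      ring
    · simp only [pdt, (hg p hp).fderiv, det2, xt, cmap, ω, ContinuousLinearMap.add_apply,
        ContinuousLinearMap.smul_apply, smul_eq_mul]
      ring
end
end

section
/- On Ω the second partial derivatives of g satisfy g_ss = [x_ss, c] − δ, g_st = [x_st, c], and g_tt = [x_tt, c] − δ. (These identities express that the second derivatives of the map q = (x,g) decompose in the basis {q_s, q_t, (0,0,1)} with coefficients of (0,0,1) equal to −δ, −δ, 0 respectively, which is the computation showing that (0,0,1) is the Blaschke affine normal of q, i.e. that q is an improper affine sphere where δ ≠ 0.) -/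
noncomputable section

theorem aux_deriv (Ω : Set (ℝ × ℝ)) (hΩ : IsOpen Ω) (u v a b f : ℝ × ℝ → ℝ) (w p : ℝ × ℝ)
    (hp : p ∈ Ω) (hu : DifferentiableAt ℝ u p) (hv : DifferentiableAt ℝ v p)
    (ha : DifferentiableAt ℝ a p) (hb : DifferentiableAt ℝ b p)
    (hf : ∀ q ∈ Ω, f q = u q * a q - v q * (-b q)) :
    fderiv ℝ f p w = fderiv ℝ u p w * a p + u p * fderiv ℝ a p w
      + fderiv ℝ v p w * b p + v p * fderiv ℝ b p w := by
  have he : f =ᶠ[nhds p] fun q => u q * a q - v q * (-b q) := by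
    filter_upwards [hΩ.mem_nhds hp] with q hq using hf q hq
  have h := ((hu.hasFDerivAt.mul ha.hasFDerivAt).sub
    (hv.hasFDerivAt.mul hb.hasFDerivAt.neg)).congr_of_eventuallyEq he
  rw [h.fderiv]
  simp
  ring

theorem aux_diff (Ω : Set (ℝ × ℝ)) (hΩ : IsOpen Ω) (u : ℝ × ℝ → ℝ) (w p : ℝ × ℝ)
    (hp : p ∈ Ω) (hu : ContDiffOn ℝ (⊤ : ℕ∞) u Ω) :
    DifferentiableAt ℝ u p ∧ DifferentiableAt ℝ (fun q => fderiv ℝ u q w) p := by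
  have h := hu.contDiffAt (hΩ.mem_nhds hp)
  refine ⟨h.differentiableAt (by simp), ?_⟩
  have h1 : ContDiffAt ℝ 1 (fderiv ℝ u) p :=
    h.fderiv_right (by norm_cast)
  exact (h1.differentiableAt (by simp)).clm_apply (differentiableAt_const w)

theorem second_derivatives_of_g
    (Ω : Set (ℝ × ℝ)) (hΩ : IsOpen Ω)
    (A B C D : ℝ × ℝ → ℝ)
    (hA : ContDiffOn ℝ (⊤ : ℕ∞) A Ω) (hB : ContDiffOn ℝ (⊤ : ℕ∞) B Ω)
    (hC : ContDiffOn ℝ (⊤ : ℕ∞) C Ω) (hD : ContDiffOn ℝ (⊤ : ℕ∞) D Ω)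
    (hCR1 : ∀ p ∈ Ω, pds A p = - pdt D p)
    (hCR2 : ∀ p ∈ Ω, pdt A p = pds D p)
    (hCR3 : ∀ p ∈ Ω, pds B p = pdt C p)
    (hCR4 : ∀ p ∈ Ω, pdt B p = - pds C p)
    (g : ℝ × ℝ → ℝ) (hg : ContDiffOn ℝ (⊤ : ℕ∞) g Ω)
    (hgs : ∀ p ∈ Ω, pds g p = det2 (xs A B p) (cmap C D p))
    (hgt : ∀ p ∈ Ω, pdt g p = det2 (xt A B p) (cmap C D p))
    :
    ∀ p ∈ Ω,
      pds (pds g) p = det2 (pds (pds A) p, pds (pds B) p) (cmap C D p) - deltaMap A B p ∧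
      pdt (pds g) p = det2 (pdt (pds A) p, pdt (pds B) p) (cmap C D p) ∧
      pdt (pdt g) p = det2 (pdt (pdt A) p, pdt (pdt B) p) (cmap C D p) - deltaMap A B p := by
  intro p hp
  have dA := fun w => aux_diff Ω hΩ A w p hp hA
  have dB := fun w => aux_diff Ω hΩ B w p hp hB
  have dC := (aux_diff Ω hΩ C 0 p hp hC).1
  have dD := (aux_diff Ω hΩ D 0 p hp hD).1
  have k1 := hCR1 p hp
  have k2 := hCR2 p hp
  have k3 := hCR3 p hp
  have k4 := hCR4 p hp
  have hs := fun w => aux_deriv Ω hΩ (pds A) (pds B) C D (pds g) w p hp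
    (dA (1, 0)).2 (dB (1, 0)).2 dC dD hgs
  have ht := fun w => aux_deriv Ω hΩ (pdt A) (pdt B) C D (pdt g) w p hp
    (dA (0, 1)).2 (dB (0, 1)).2 dC dD hgt
  have e1 : pds (pds g) p = pds (pds A) p * C p + pds A p * pds C p
      + pds (pds B) p * D p + pds B p * pds D p := hs (1, 0)
  have e2 : pdt (pds g) p = pdt (pds A) p * C p + pds A p * pdt C p
      + pdt (pds B) p * D p + pds B p * pdt D p := hs (0, 1)
  have e3 : pdt (pdt g) p = pdt (pdt A) p * C p + pdt A p * pdt C p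
      + pdt (pdt B) p * D p + pdt B p * pdt D p := ht (0, 1)
  have c1 : pdt D p = - pds A p := by linarith
  have c4 : pds C p = - pdt B p := by linarith
  simp only [det2, cmap, deltaMap]
  rw [e1, e2, e3, c1, c4, ← k2, ← k3]
  refine ⟨by ring, by ring, by ring⟩
end
end

section
/- For all (s,x̄) ∈ I × U, the partial derivative of the generating family G in s satisfies G_s(s,x̄) = [∂/∂s(x(s,t(s,x̄))), c(s,t(s,x̄))] = [x̄ − x(s,t(s,x̄)), ∂/∂s(c(s,t(s,x̄)))]. -/
noncomputable section

theorem Gs_formulas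
    (Ω : Set (ℝ × ℝ)) (hΩ : IsOpen Ω)
    (A B C D : ℝ × ℝ → ℝ)
    (hA : ContDiffOn ℝ (⊤ : ℕ∞) A Ω) (hB : ContDiffOn ℝ (⊤ : ℕ∞) B Ω)
    (hC : ContDiffOn ℝ (⊤ : ℕ∞) C Ω) (hD : ContDiffOn ℝ (⊤ : ℕ∞) D Ω)
    (hCR1 : ∀ p ∈ Ω, pds A p = - pdt D p)
    (hCR2 : ∀ p ∈ Ω, pdt A p = pds D p)
    (hCR3 : ∀ p ∈ Ω, pds B p = pdt C p)
    (hCR4 : ∀ p ∈ Ω, pdt B p = - pds C p)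
    (g : ℝ × ℝ → ℝ) (hg : ContDiffOn ℝ (⊤ : ℕ∞) g Ω)
    (hgs : ∀ p ∈ Ω, pds g p = det2 (xs A B p) (cmap C D p))
    (hgt : ∀ p ∈ Ω, pdt g p = det2 (xt A B p) (cmap C D p))
    (s₀ t₀ : ℝ) (hst₀ : (s₀, t₀) ∈ Ω)
    (hne₀ : det2 (xt A B (s₀, t₀)) (cmap C D (s₀, t₀)) ≠ 0)
    (I : Set ℝ) (U : Set (ℝ × ℝ)) (hI : IsOpen I) (hU : IsOpen U)
    (hs₀ : s₀ ∈ I) (hx₀ : xmap A B (s₀, t₀) ∈ U)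
    (T : ℝ → ℝ × ℝ → ℝ)
    (hT : ContDiffOn ℝ (⊤ : ℕ∞) (fun q : ℝ × (ℝ × ℝ) => T q.1 q.2) (I ×ˢ U))
    (hT₀ : T s₀ (xmap A B (s₀, t₀)) = t₀)
    (hTmem : ∀ s ∈ I, ∀ xb ∈ U, (s, T s xb) ∈ Ω)
    (hTeq : ∀ s ∈ I, ∀ xb ∈ U,
      det2 (xb - xmap A B (s, T s xb)) (cmap C D (s, T s xb)) = 0)
    :
    ∀ s ∈ I, ∀ xb ∈ U,
      deriv (fun s' => g (s', T s' xb)) s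
        = det2 (deriv (fun s' => xmap A B (s', T s' xb)) s) (cmap C D (s, T s xb)) ∧
      deriv (fun s' => g (s', T s' xb)) s
        = det2 (xb - xmap A B (s, T s xb)) (deriv (fun s' => cmap C D (s', T s' xb)) s) := by
  intro s hs xb hxb
  have hp := hTmem s hs xb hxb
  have hTd : HasDerivAt (fun s' => T s' xb) (deriv (fun s' => T s' xb) s) s := by
    have h1 : DifferentiableAt ℝ (fun q : ℝ × (ℝ × ℝ) => T q.1 q.2) (s, xb) :=
      (hT.contDiffAt ((hI.prod hU).mem_nhds ⟨hs, hxb⟩)).differentiableAt (by simp)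
    have h2 : DifferentiableAt ℝ (fun s' : ℝ => (s', xb)) s := by fun_prop
    have h3 : DifferentiableAt ℝ (fun s' => T s' xb) s :=
      DifferentiableAt.comp (g := fun q : ℝ × (ℝ × ℝ) => T q.1 q.2) s h1 h2
    exact h3.hasDerivAt
  set τ := deriv (fun s' => T s' xb) s with hτ
  have key : ∀ f : ℝ × ℝ → ℝ, ContDiffOn ℝ (⊤ : ℕ∞) f Ω →
      HasDerivAt (fun s' => f (s', T s' xb))
        (pds f (s, T s xb) + τ * pdt f (s, T s xb)) s := by
    intro f hf
    have h1 : DifferentiableAt ℝ f (s, T s xb) :=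
      (hf.contDiffAt (hΩ.mem_nhds hp)).differentiableAt (by simp)
    have h2 : HasDerivAt (fun s' => (s', T s' xb)) ((1 : ℝ), τ) s :=
      (hasDerivAt_id s).prodMk hTd
    have h3 := HasFDerivAt.comp_hasDerivAt (f := fun s' => (s', T s' xb)) s h1.hasFDerivAt h2
    have e : ((1 : ℝ), τ) = (1, 0) + τ • ((0 : ℝ), (1 : ℝ)) := by simp
    rw [e, map_add, map_smul, smul_eq_mul] at h3
    exact h3
  have kA := key A hA
  have kB := key B hB
  have kC := key C hC
  have kD := key D hD
  have kg := key g hg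
  have kx : HasDerivAt (fun s' => xmap A B (s', T s' xb)) _ s := kA.prodMk kB
  have kc : HasDerivAt (fun s' => cmap C D (s', T s' xb)) _ s := kD.neg.prodMk kC
  have kz := ((kA.const_sub xb.1).mul kC).sub ((kB.const_sub xb.2).mul kD.neg)
  have hz : HasDerivAt (fun _ : ℝ => (0 : ℝ)) 0 s := hasDerivAt_const s 0
  have heq := (hz.congr_of_eventuallyEq (by
    filter_upwards [hI.mem_nhds hs] with s' hs'
    have := hTeq s' hs' xb hxb
    simpa [det2, xmap, cmap] using this)).unique kz
  have e1 := hgs _ hp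
  have e2 := hgt _ hp
  rw [kg.deriv, kx.deriv, kc.deriv, e1, e2]
  simp only [det2, xs, xt, xmap, cmap, Prod.fst_sub, Prod.snd_sub, Pi.neg_apply] at heq ⊢
  constructor
  · ring
  · linear_combination heq
end
end

section
/- Let (s,x̄) ∈ I × U and suppose the vectors c(s,t(s,x̄)) and ∂/∂s(c(s,t(s,x̄))) are linearly independent in ℝ². Then G_s(s,x̄) = 0 if and only if x̄ = x(s,t(s,x̄)). -/
noncomputable section

/-- Linear independence of two plane vectors gives a nonzero determinant. -/
lemma det_ne_of_li (c e : ℝ × ℝ) (h : LinearIndependent ℝ ![c, e]) :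
    c.1 * e.2 - c.2 * e.1 ≠ 0 := by
  intro h0
  rw [LinearIndependent.pair_iff] at h
  have h1 := h e.2 (-c.2) (by ext <;> simp <;> linarith)
  have h2 := h e.1 (-c.1) (by ext <;> simp <;> linarith)
  have h3 := h 0 1 (by ext <;> simp [h1.1, h2.1])
  exact one_ne_zero h3.2

theorem Gs_eq_zero_iff
    (Ω : Set (ℝ × ℝ)) (hΩ : IsOpen Ω)
    (A B C D : ℝ × ℝ → ℝ)
    (hA : ContDiffOn ℝ (⊤ : ℕ∞) A Ω) (hB : ContDiffOn ℝ (⊤ : ℕ∞) B Ω)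
    (hC : ContDiffOn ℝ (⊤ : ℕ∞) C Ω) (hD : ContDiffOn ℝ (⊤ : ℕ∞) D Ω)
    (hCR1 : ∀ p ∈ Ω, pds A p = - pdt D p)
    (hCR2 : ∀ p ∈ Ω, pdt A p = pds D p)
    (hCR3 : ∀ p ∈ Ω, pds B p = pdt C p)
    (hCR4 : ∀ p ∈ Ω, pdt B p = - pds C p)
    (g : ℝ × ℝ → ℝ) (hg : ContDiffOn ℝ (⊤ : ℕ∞) g Ω)
    (hgs : ∀ p ∈ Ω, pds g p = det2 (xs A B p) (cmap C D p))
    (hgt : ∀ p ∈ Ω, pdt g p = det2 (xt A B p) (cmap C D p))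
    (s₀ t₀ : ℝ) (hst₀ : (s₀, t₀) ∈ Ω)
    (hne₀ : det2 (xt A B (s₀, t₀)) (cmap C D (s₀, t₀)) ≠ 0)
    (I : Set ℝ) (U : Set (ℝ × ℝ)) (hI : IsOpen I) (hU : IsOpen U)
    (hs₀ : s₀ ∈ I) (hx₀ : xmap A B (s₀, t₀) ∈ U)
    (T : ℝ → ℝ × ℝ → ℝ)
    (hT : ContDiffOn ℝ (⊤ : ℕ∞) (fun q : ℝ × (ℝ × ℝ) => T q.1 q.2) (I ×ˢ U))
    (hT₀ : T s₀ (xmap A B (s₀, t₀)) = t₀)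
    (hTmem : ∀ s ∈ I, ∀ xb ∈ U, (s, T s xb) ∈ Ω)
    (hTeq : ∀ s ∈ I, ∀ xb ∈ U,
      det2 (xb - xmap A B (s, T s xb)) (cmap C D (s, T s xb)) = 0)
    (s : ℝ) (xb : ℝ × ℝ) (hs : s ∈ I) (hxb : xb ∈ U)
    (hli : LinearIndependent ℝ
      ![cmap C D (s, T s xb), deriv (fun s' => cmap C D (s', T s' xb)) s])
    :
    deriv (fun s' => g (s', T s' xb)) s = 0 ↔ xb = xmap A B (s, T s xb) := by
  -- `q` is the curve in question and `τ` its slope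
  have hp : (s, T s xb) ∈ Ω := hTmem s hs xb hxb
  have hTd : DifferentiableAt ℝ (fun s' => T s' xb) s := by
    have h1 : DifferentiableAt ℝ (fun q : ℝ × (ℝ × ℝ) => T q.1 q.2) (s, xb) :=
      (hT.contDiffAt ((hI.prod hU).mem_nhds ⟨hs, hxb⟩)).differentiableAt (by simp)
    exact h1.comp s (f := fun s' : ℝ => (s', xb)) (by fun_prop)
  obtain ⟨τ, hτ⟩ : ∃ τ, HasDerivAt (fun s' => T s' xb) τ s := ⟨_, hTd.hasDerivAt⟩
  have key : ∀ f : ℝ × ℝ → ℝ, ContDiffOn ℝ (⊤ : ℕ∞) f Ω →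
      HasDerivAt (fun s' => f (s', T s' xb))
        (pds f (s, T s xb) + τ * pdt f (s, T s xb)) s := by
    intro f hf
    have h1 : DifferentiableAt ℝ f (s, T s xb) :=
      (hf.contDiffAt (hΩ.mem_nhds hp)).differentiableAt (by simp)
    have h2 : HasDerivAt (fun s' => (s', T s' xb)) ((1 : ℝ), τ) s :=
      (hasDerivAt_id s).prodMk hτ
    have h3 := h1.hasFDerivAt.comp_hasDerivAt s h2
    have h4 : ((1 : ℝ), τ) = (1, 0) + τ • ((0 : ℝ), (1 : ℝ)) := by simp
    rw [h4, map_add, map_smul, smul_eq_mul] at h3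
    exact h3
  have kA := key A hA
  have kB := key B hB
  have kC := key C hC
  have kD := key D hD
  have kG := key g hg
  rw [hgs _ hp, hgt _ hp] at kG
  have kc : HasDerivAt (fun s' => cmap C D (s', T s' xb)) _ s := kD.neg.prodMk kC
  rw [kc.deriv] at hli
  rw [kG.deriv]
  have kE := ((kA.const_sub xb.1).mul kC).sub ((kB.const_sub xb.2).mul kD.neg)
  have kZ := kE.congr_of_eventuallyEq (f₁ := fun _ => (0 : ℝ)) (by
    filter_upwards [hI.mem_nhds hs] with s' hs'
    have := hTeq s' hs' xb hxb
    simp only [det2, xmap, cmap, Prod.fst_sub, Prod.snd_sub] at this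
    simpa using this.symm)
  have hZ := kZ.unique (hasDerivAt_const s (0 : ℝ))
  have hE := hTeq s hs xb hxb
  simp only [det2, xmap, cmap, xs, xt, Prod.fst_sub, Prod.snd_sub, Pi.neg_apply] at hE hZ hli ⊢
  have hd := det_ne_of_li _ _ hli
  simp only at hd
  constructor
  · intro h0
    have e1 : (xb.1 - A (s, T s xb)) = 0 := by
      apply (mul_eq_zero.mp _).resolve_right hd
      linear_combination (-D (s, T s xb)) * (hZ + h0) - (-(pds D (s, T s xb) + τ * pdt D (s, T s xb))) * hE
    have e2 : (xb.2 - B (s, T s xb)) = 0 := by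
      apply (mul_eq_zero.mp _).resolve_right hd
      linear_combination (C (s, T s xb)) * (hZ + h0) - (pds C (s, T s xb) + τ * pdt C (s, T s xb)) * hE
    ext
    · exact sub_eq_zero.mp e1
    · exact sub_eq_zero.mp e2
  · intro h0
    have e1 : xb.1 = A (s, T s xb) := congrArg Prod.fst h0
    have e2 : xb.2 = B (s, T s xb) := congrArg Prod.snd h0
    rw [← e1, ← e2] at hZ
    linear_combination -hZ
end
end

section
/- For all (s,x̄) ∈ I × U one has [∂/∂s(x(s,t(s,x̄))), ∂/∂s(c(s,t(s,x̄)))] = −(1 + t_s(s,x̄)²)·δ(s,t(s,x̄)). -/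
noncomputable section

theorem aux_hasDerivAt (F : ℝ × ℝ → ℝ) (g : ℝ → ℝ) (s τ : ℝ)
    (hF : DifferentiableAt ℝ F (s, g s)) (hg : HasDerivAt g τ s) :
    HasDerivAt (fun s' => F (s', g s')) (pds F (s, g s) + τ * pdt F (s, g s)) s := by
  have h1 : HasDerivAt (fun s' : ℝ => (s', g s')) ((1 : ℝ), τ) s := (hasDerivAt_id s).prodMk hg
  have h2 := hF.hasFDerivAt.comp_hasDerivAt s h1
  have h3 : ((1 : ℝ), τ) = ((1 : ℝ), (0 : ℝ)) + τ • ((0 : ℝ), (1 : ℝ)) := by simp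
  rw [h3, map_add, map_smul, smul_eq_mul] at h2
  exact h2

theorem bracket_dsx_dsc
    (Ω : Set (ℝ × ℝ)) (hΩ : IsOpen Ω)
    (A B C D : ℝ × ℝ → ℝ)
    (hA : ContDiffOn ℝ (⊤ : ℕ∞) A Ω) (hB : ContDiffOn ℝ (⊤ : ℕ∞) B Ω)
    (hC : ContDiffOn ℝ (⊤ : ℕ∞) C Ω) (hD : ContDiffOn ℝ (⊤ : ℕ∞) D Ω)
    (hCR1 : ∀ p ∈ Ω, pds A p = - pdt D p)
    (hCR2 : ∀ p ∈ Ω, pdt A p = pds D p)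
    (hCR3 : ∀ p ∈ Ω, pds B p = pdt C p)
    (hCR4 : ∀ p ∈ Ω, pdt B p = - pds C p)
    (s₀ t₀ : ℝ) (hst₀ : (s₀, t₀) ∈ Ω)
    (hne₀ : det2 (xt A B (s₀, t₀)) (cmap C D (s₀, t₀)) ≠ 0)
    (I : Set ℝ) (U : Set (ℝ × ℝ)) (hI : IsOpen I) (hU : IsOpen U)
    (hs₀ : s₀ ∈ I) (hx₀ : xmap A B (s₀, t₀) ∈ U)
    (T : ℝ → ℝ × ℝ → ℝ)
    (hT : ContDiffOn ℝ (⊤ : ℕ∞) (fun q : ℝ × (ℝ × ℝ) => T q.1 q.2) (I ×ˢ U))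
    (hT₀ : T s₀ (xmap A B (s₀, t₀)) = t₀)
    (hTmem : ∀ s ∈ I, ∀ xb ∈ U, (s, T s xb) ∈ Ω)
    (hTeq : ∀ s ∈ I, ∀ xb ∈ U,
      det2 (xb - xmap A B (s, T s xb)) (cmap C D (s, T s xb)) = 0)
    :
    ∀ s ∈ I, ∀ xb ∈ U,
      det2 (deriv (fun s' => xmap A B (s', T s' xb)) s)
          (deriv (fun s' => cmap C D (s', T s' xb)) s)
        = -(1 + (deriv (fun s' => T s' xb) s) ^ 2) * deltaMap A B (s, T s xb) := by
  intro s hs xb hxb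
  have hm := hTmem s hs xb hxb
  have hn := hΩ.mem_nhds hm
  have hg : DifferentiableAt ℝ (fun s' => T s' xb) s := by
    have h1 : DifferentiableAt ℝ (fun q : ℝ × (ℝ × ℝ) => T q.1 q.2) (s, xb) :=
      (hT.contDiffAt ((hI.prod hU).mem_nhds ⟨hs, hxb⟩)).differentiableAt (by simp)
    have h2 : DifferentiableAt ℝ (fun s' : ℝ => (s', xb)) s := by fun_prop
    exact DifferentiableAt.comp s h1 h2
  have key : ∀ F : ℝ × ℝ → ℝ, ContDiffOn ℝ (⊤ : ℕ∞) F Ω → _ := fun F hF =>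
    aux_hasDerivAt F (fun s' => T s' xb) s _
      ((hF.contDiffAt hn).differentiableAt (by simp)) hg.hasDerivAt
  have hx := ((key A hA).prodMk (key B hB)).deriv
  have hc := ((key D hD).neg.prodMk (key C hC)).deriv
  have hx' : deriv (fun s' => xmap A B (s', T s' xb)) s = _ := hx
  have hc' : deriv (fun s' => cmap C D (s', T s' xb)) s = _ := hc
  rw [hx', hc']
  simp only [det2, deltaMap]
  rw [hCR1 _ hm, hCR2 _ hm, hCR3 _ hm, hCR4 _ hm]
  ring
end
end

section
/- Let (s,x̄) ∈ I × U with x̄ = x(s,t(s,x̄)). Then [∂²/∂s²(x(s,t(s,x̄))), c(s,t(s,x̄))] = 2(1 + t_s(s,x̄)²)·δ(s,t(s,x̄)). -/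
noncomputable section

lemma aux_hasDeriv {I : Set ℝ} (hI : IsOpen I) {f : ℝ → ℝ}
    (hf : ContDiffOn ℝ (⊤ : ℕ∞) f I) {s : ℝ} (hs : s ∈ I) : HasDerivAt f (deriv f s) s :=
  ((hf.contDiffAt (hI.mem_nhds hs)).differentiableAt (by simp)).hasDerivAt

lemma aux_smooth {I : Set ℝ} (hI : IsOpen I) {f : ℝ → ℝ}
    (hf : ContDiffOn ℝ (⊤ : ℕ∞) f I) : ContDiffOn ℝ (⊤ : ℕ∞) (deriv f) I :=
  hf.deriv_of_isOpen hI (by simp)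

lemma aux_second {I : Set ℝ} (hI : IsOpen I) {a b p q : ℝ → ℝ} {x y : ℝ}
    (ha : ContDiffOn ℝ (⊤ : ℕ∞) a I) (hb : ContDiffOn ℝ (⊤ : ℕ∞) b I)
    (hp : ContDiffOn ℝ (⊤ : ℕ∞) p I) (hq : ContDiffOn ℝ (⊤ : ℕ∞) q I)
    (h : ∀ s ∈ I, (x - a s) * q s - (y - b s) * p s = 0)
    {s : ℝ} (hs : s ∈ I) (hx : x = a s) (hy : y = b s) :
    deriv (deriv a) s * q s - deriv (deriv b) s * p s
      = -2 * (deriv a s * deriv q s - deriv b s * deriv p s) := by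
  have zero : ∀ {F : ℝ → ℝ} {F' r : ℝ}, (∀ s ∈ I, F s = 0) → r ∈ I → HasDerivAt F F' r →
      F' = 0 := by
    intro F F' r hF hr hd
    have : F =ᶠ[nhds r] fun _ => (0 : ℝ) := by
      filter_upwards [hI.mem_nhds hr] with z hz using hF z hz
    exact hd.unique ((hasDerivAt_const r (0 : ℝ)).congr_of_eventuallyEq this)
  have h1 : ∀ r ∈ I, (-deriv a r * q r + (x - a r) * deriv q r)
      - (-deriv b r * p r + (y - b r) * deriv p r) = 0 := by
    intro r hr
    exact zero h hr ((((aux_hasDeriv hI ha hr).const_sub x).mul (aux_hasDeriv hI hq hr)).sub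
      (((aux_hasDeriv hI hb hr).const_sub y).mul (aux_hasDeriv hI hp hr)))
  have da := aux_hasDeriv hI ha hs
  have db := aux_hasDeriv hI hb hs
  have dp := aux_hasDeriv hI hp hs
  have dq := aux_hasDeriv hI hq hs
  have dda := aux_hasDeriv hI (aux_smooth hI ha) hs
  have ddb := aux_hasDeriv hI (aux_smooth hI hb) hs
  have ddp := aux_hasDeriv hI (aux_smooth hI hp) hs
  have ddq := aux_hasDeriv hI (aux_smooth hI hq) hs
  have h2 := zero h1 hs (((dda.neg.mul dq).add ((da.const_sub x).mul ddq)).sub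
    ((ddb.neg.mul dp).add ((db.const_sub y).mul ddp)))
  simp only [Pi.neg_apply] at h2
  rw [← hx, ← hy] at h2
  linear_combination -h2

lemma aux_chain {f : ℝ × ℝ → ℝ} {τ : ℝ → ℝ} {s τ' : ℝ}
    (hf : DifferentiableAt ℝ f (s, τ s)) (hτ : HasDerivAt τ τ' s) :
    deriv (fun r => f (r, τ r)) s = pds f (s, τ s) + τ' * pdt f (s, τ s) := by
  have h := hf.hasFDerivAt.comp_hasDerivAt s ((hasDerivAt_id s).prodMk hτ)
  have e : ((1 : ℝ), τ') = (1, 0) + τ' • ((0 : ℝ), (1 : ℝ)) := by simp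
  have h2 := h.deriv
  rw [e, map_add, map_smul] at h2
  exact h2

theorem bracket_dssx_c
    (Ω : Set (ℝ × ℝ)) (hΩ : IsOpen Ω)
    (A B C D : ℝ × ℝ → ℝ)
    (hA : ContDiffOn ℝ (⊤ : ℕ∞) A Ω) (hB : ContDiffOn ℝ (⊤ : ℕ∞) B Ω)
    (hC : ContDiffOn ℝ (⊤ : ℕ∞) C Ω) (hD : ContDiffOn ℝ (⊤ : ℕ∞) D Ω)
    (hCR1 : ∀ p ∈ Ω, pds A p = - pdt D p)
    (hCR2 : ∀ p ∈ Ω, pdt A p = pds D p)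
    (hCR3 : ∀ p ∈ Ω, pds B p = pdt C p)
    (hCR4 : ∀ p ∈ Ω, pdt B p = - pds C p)
    (s₀ t₀ : ℝ) (hst₀ : (s₀, t₀) ∈ Ω)
    (hne₀ : det2 (xt A B (s₀, t₀)) (cmap C D (s₀, t₀)) ≠ 0)
    (I : Set ℝ) (U : Set (ℝ × ℝ)) (hI : IsOpen I) (hU : IsOpen U)
    (hs₀ : s₀ ∈ I) (hx₀ : xmap A B (s₀, t₀) ∈ U)
    (T : ℝ → ℝ × ℝ → ℝ)
    (hT : ContDiffOn ℝ (⊤ : ℕ∞) (fun q : ℝ × (ℝ × ℝ) => T q.1 q.2) (I ×ˢ U))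
    (hT₀ : T s₀ (xmap A B (s₀, t₀)) = t₀)
    (hTmem : ∀ s ∈ I, ∀ xb ∈ U, (s, T s xb) ∈ Ω)
    (hTeq : ∀ s ∈ I, ∀ xb ∈ U,
      det2 (xb - xmap A B (s, T s xb)) (cmap C D (s, T s xb)) = 0)
    (s : ℝ) (xb : ℝ × ℝ) (hs : s ∈ I) (hxb : xb ∈ U)
    (hx : xb = xmap A B (s, T s xb))
    :
    det2 (deriv (deriv (fun s' => xmap A B (s', T s' xb))) s) (cmap C D (s, T s xb))
      = 2 * (1 + (deriv (fun s' => T s' xb) s) ^ 2) * deltaMap A B (s, T s xb) := by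
  have hτ : ContDiffOn ℝ (⊤ : ℕ∞) (fun r => T r xb) I :=
    hT.comp (f := fun r : ℝ => (r, xb)) (by fun_prop) (fun r hr => ⟨hr, hxb⟩)
  have comp : ∀ {f : ℝ × ℝ → ℝ}, ContDiffOn ℝ (⊤ : ℕ∞) f Ω →
      ContDiffOn ℝ (⊤ : ℕ∞) (fun r => f (r, T r xb)) I := fun hf =>
    hf.comp (contDiffOn_id.prodMk hτ) (fun r hr => hTmem r hr xb hxb)
  have hm := hTmem s hs xb hxb
  have dτ := aux_hasDeriv hI hτ hs
  have chain : ∀ {f : ℝ × ℝ → ℝ}, ContDiffOn ℝ (⊤ : ℕ∞) f Ω →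
      deriv (fun r => f (r, T r xb)) s
        = pds f (s, T s xb) + deriv (fun r => T r xb) s * pdt f (s, T s xb) := fun hf =>
    aux_chain (τ := fun r => T r xb)
      ((hf.contDiffAt (hΩ.mem_nhds hm)).differentiableAt (by simp)) dτ
  have key := aux_second hI (x := xb.1) (y := xb.2) (comp hA) (comp hB) (comp hD).neg (comp hC)
    (fun r hr => by simpa [det2, xmap, cmap] using hTeq r hr xb hxb) hs
    (congrArg Prod.fst hx) (congrArg Prod.snd hx)
  have e1 : deriv (fun s' => xmap A B (s', T s' xb)) =ᶠ[nhds s] fun r =>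
      (deriv (fun r => A (r, T r xb)) r, deriv (fun r => B (r, T r xb)) r) := by
    filter_upwards [hI.mem_nhds hs] with r hr
    exact ((aux_hasDeriv hI (comp hA) hr).prodMk (aux_hasDeriv hI (comp hB) hr)).deriv
  have e2 := e1.deriv_eq.trans
    ((aux_hasDeriv hI (aux_smooth hI (comp hA)) hs).prodMk
      (aux_hasDeriv hI (aux_smooth hI (comp hB)) hs)).deriv
  have hn : deriv (fun r => -D (r, T r xb)) s = - deriv (fun r => D (r, T r xb)) s :=
    (aux_hasDeriv hI (comp hD) hs).neg.deriv
  rw [e2]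
  rw [hn, chain hA, chain hB, chain hC, chain hD] at key
  have c1 := hCR1 _ hm
  have c2 := hCR2 _ hm
  have c3 := hCR3 _ hm
  have c4 := hCR4 _ hm
  have c1' : pdt D (s, T s xb) = - pds A (s, T s xb) := by linarith
  have c4' : pds C (s, T s xb) = - pdt B (s, T s xb) := by linarith
  rw [c1', ← c2, ← c3, c4'] at key
  simp only [det2, cmap, deltaMap]
  refine key.trans ?_
  ring
end
end

section
/- Let (s,x̄) ∈ I × U with x̄ = x(s,t(s,x̄)). Then G_ss(s,x̄) = (1 + t_s(s,x̄)²)·δ(s,t(s,x̄)). In particular, at such a point G_ss(s,x̄) = 0 if and only if δ(s,t(s,x̄)) = 0. -/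
noncomputable section

theorem comp_hasDeriv (Ω : Set (ℝ × ℝ)) (hΩ : IsOpen Ω) (F : ℝ × ℝ → ℝ)
    (hF : ContDiffOn ℝ (⊤ : ℕ∞) F Ω) (τ : ℝ → ℝ) (s : ℝ)
    (hτ : DifferentiableAt ℝ τ s) (hm : (s, τ s) ∈ Ω) :
    HasDerivAt (fun r => F (r, τ r))
      (pds F (s, τ s) + deriv τ s * pdt F (s, τ s)) s := by
  have h1 : DifferentiableAt ℝ F (s, τ s) :=
    (hF.contDiffAt (hΩ.mem_nhds hm)).differentiableAt (by simp)
  have h2 : HasDerivAt (fun r => (r, τ r)) ((1 : ℝ), deriv τ s) s :=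
    (hasDerivAt_id s).prodMk hτ.hasDerivAt
  have h3 := h1.hasFDerivAt.comp_hasDerivAt s h2
  have e : ((1 : ℝ), deriv τ s) = (1, 0) + deriv τ s • ((0 : ℝ), (1 : ℝ)) := by simp
  rw [e, map_add, map_smul, smul_eq_mul] at h3
  exact h3

theorem Gss_formula
    (Ω : Set (ℝ × ℝ)) (hΩ : IsOpen Ω)
    (A B C D : ℝ × ℝ → ℝ)
    (hA : ContDiffOn ℝ (⊤ : ℕ∞) A Ω) (hB : ContDiffOn ℝ (⊤ : ℕ∞) B Ω)
    (hC : ContDiffOn ℝ (⊤ : ℕ∞) C Ω) (hD : ContDiffOn ℝ (⊤ : ℕ∞) D Ω)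
    (hCR1 : ∀ p ∈ Ω, pds A p = - pdt D p)
    (hCR2 : ∀ p ∈ Ω, pdt A p = pds D p)
    (hCR3 : ∀ p ∈ Ω, pds B p = pdt C p)
    (hCR4 : ∀ p ∈ Ω, pdt B p = - pds C p)
    (g : ℝ × ℝ → ℝ) (hg : ContDiffOn ℝ (⊤ : ℕ∞) g Ω)
    (hgs : ∀ p ∈ Ω, pds g p = det2 (xs A B p) (cmap C D p))
    (hgt : ∀ p ∈ Ω, pdt g p = det2 (xt A B p) (cmap C D p))
    (s₀ t₀ : ℝ) (hst₀ : (s₀, t₀) ∈ Ω)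
    (hne₀ : det2 (xt A B (s₀, t₀)) (cmap C D (s₀, t₀)) ≠ 0)
    (I : Set ℝ) (U : Set (ℝ × ℝ)) (hI : IsOpen I) (hU : IsOpen U)
    (hs₀ : s₀ ∈ I) (hx₀ : xmap A B (s₀, t₀) ∈ U)
    (T : ℝ → ℝ × ℝ → ℝ)
    (hT : ContDiffOn ℝ (⊤ : ℕ∞) (fun q : ℝ × (ℝ × ℝ) => T q.1 q.2) (I ×ˢ U))
    (hT₀ : T s₀ (xmap A B (s₀, t₀)) = t₀)
    (hTmem : ∀ s ∈ I, ∀ xb ∈ U, (s, T s xb) ∈ Ω)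
    (hTeq : ∀ s ∈ I, ∀ xb ∈ U,
      det2 (xb - xmap A B (s, T s xb)) (cmap C D (s, T s xb)) = 0)
    (s : ℝ) (xb : ℝ × ℝ) (hs : s ∈ I) (hxb : xb ∈ U)
    (hx : xb = xmap A B (s, T s xb))
    :
    deriv (deriv (fun s' => g (s', T s' xb))) s
      = (1 + (deriv (fun s' => T s' xb) s) ^ 2) * deltaMap A B (s, T s xb) ∧
    (deriv (deriv (fun s' => g (s', T s' xb))) s = 0 ↔ deltaMap A B (s, T s xb) = 0) := by
  have hτc : ContDiffOn ℝ (⊤ : ℕ∞) (fun r => T r xb) I :=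
    hT.comp (g := fun q : ℝ × (ℝ × ℝ) => T q.1 q.2) (f := fun r : ℝ => (r, xb))
      (by fun_prop) (fun r hr => ⟨hr, hxb⟩)
  have hpc : ContDiffOn ℝ (⊤ : ℕ∞) (fun r => (r, T r xb)) I := contDiffOn_id.prodMk hτc
  have hmaps : Set.MapsTo (fun r => (r, T r xb)) I Ω := fun r hr => hTmem r hr xb hxb
  have hτd : ∀ r ∈ I, DifferentiableAt ℝ (fun r => T r xb) r := fun r hr =>
    (hτc.contDiffAt (hI.mem_nhds hr)).differentiableAt (by simp)
  have key : ∀ F : ℝ × ℝ → ℝ, ContDiffOn ℝ (⊤ : ℕ∞) F Ω → ∀ r ∈ I,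
      HasDerivAt (fun r => F (r, T r xb))
        (pds F (r, T r xb) + deriv (fun r => T r xb) r * pdt F (r, T r xb)) r :=
    fun F hF r hr => comp_hasDeriv Ω hΩ F hF (fun r => T r xb) r (hτd r hr) (hmaps hr)
  have key2 : ∀ F : ℝ × ℝ → ℝ, ContDiffOn ℝ (⊤ : ℕ∞) F Ω →
      DifferentiableAt ℝ (deriv (fun r => F (r, T r xb))) s := by
    intro F hF
    have h1 : ContDiffOn ℝ (⊤ : ℕ∞) (fun r => F (r, T r xb)) I := hF.comp hpc hmaps
    have h2 : ContDiffOn ℝ 1 (deriv (fun r => F (r, T r xb))) I :=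
      h1.deriv_of_isOpen hI (WithTop.coe_le_coe.2 (le_top : (1 + 1 : ℕ∞) ≤ ⊤))
    exact (h2.contDiffAt (hI.mem_nhds hs)).differentiableAt (by simp)
  have hG : ∀ r ∈ I, deriv (fun s' => g (s', T s' xb)) r =
      (xb.1 - A (r, T r xb)) * deriv (fun r => C (r, T r xb)) r
      + (xb.2 - B (r, T r xb)) * deriv (fun r => D (r, T r xb)) r := by
    intro r hr
    have hz : HasDerivAt (fun r => (xb.1 - A (r, T r xb)) * C (r, T r xb)
        + (xb.2 - B (r, T r xb)) * D (r, T r xb)) 0 r := by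
      refine (hasDerivAt_const r (0 : ℝ)).congr_of_eventuallyEq ?_
      filter_upwards [hI.mem_nhds hr] with q hq
      have := hTeq q hq xb hxb
      simp only [det2, xmap, cmap, Prod.fst_sub, Prod.snd_sub] at this
      linarith
    have hz2 := (((key A hA r hr).const_sub xb.1).mul (key C hC r hr)).add
      (((key B hB r hr).const_sub xb.2).mul (key D hD r hr))
    have e := hz.unique hz2
    rw [(key g hg r hr).deriv, (key C hC r hr).deriv, (key D hD r hr).deriv,
      hgs _ (hmaps hr), hgt _ (hmaps hr)]
    simp only [det2, xs, xt, cmap]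
    linarith
  have hGe : deriv (fun s' => g (s', T s' xb)) =ᶠ[nhds s] fun r =>
      (xb.1 - A (r, T r xb)) * deriv (fun r => C (r, T r xb)) r
      + (xb.2 - B (r, T r xb)) * deriv (fun r => D (r, T r xb)) r := by
    filter_upwards [hI.mem_nhds hs] with q hq using hG q hq
  have hfin := (((key A hA s hs).const_sub xb.1).mul (key2 C hC).hasDerivAt).add
      (((key B hB s hs).const_sub xb.2).mul (key2 D hD).hasDerivAt)
  have hx1 : xb.1 - A (s, T s xb) = 0 := by
    have := congrArg Prod.fst hx
    simp only [xmap] at this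
    linarith
  have hx2 : xb.2 - B (s, T s xb) = 0 := by
    have := congrArg Prod.snd hx
    simp only [xmap] at this
    linarith
  have main : deriv (deriv (fun s' => g (s', T s' xb))) s
      = (1 + (deriv (fun s' => T s' xb) s) ^ 2) * deltaMap A B (s, T s xb) := by
    rw [hGe.deriv_eq]
    refine hfin.deriv.trans ?_
    rw [hx1, hx2, (key C hC s hs).deriv, (key D hD s hs).deriv]
    have h1 := hCR1 _ (hmaps hs)
    have h2 := hCR2 _ (hmaps hs)
    have h3 := hCR3 _ (hmaps hs)
    have h4 := hCR4 _ (hmaps hs)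
    have h1' : pdt D (s, T s xb) = - pds A (s, T s xb) := by linarith
    have h4' : pds C (s, T s xb) = - pdt B (s, T s xb) := by linarith
    rw [h1', ← h2, ← h3, h4', deltaMap]
    ring
  refine ⟨main, ?_⟩
  rw [main, mul_eq_zero]
  have : (1 + (deriv (fun s' => T s' xb) s) ^ 2) ≠ 0 := by positivity
  tauto
end
end

section
/- Let (s,x̄) ∈ I × U with x̄ = x(s,t(s,x̄)), δ(s,t(s,x̄)) = 0, and [x_t(s,t(s,x̄)), c(s,t(s,x̄))] ≠ 0. Then ∂/∂s(x(s,t(s,x̄))) = x_s(s,t(s,x̄)) + t_s(s,x̄)·x_t(s,t(s,x̄)) = 0; equivalently, if α is defined by x_s + α·x_t = 0 at the singular point (s,t(s,x̄)), then α = t_s(s,x̄). -/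
noncomputable section

theorem dsx_vanishes_on_singular_set
    (Ω : Set (ℝ × ℝ)) (hΩ : IsOpen Ω)
    (A B C D : ℝ × ℝ → ℝ)
    (hA : ContDiffOn ℝ (⊤ : ℕ∞) A Ω) (hB : ContDiffOn ℝ (⊤ : ℕ∞) B Ω)
    (hC : ContDiffOn ℝ (⊤ : ℕ∞) C Ω) (hD : ContDiffOn ℝ (⊤ : ℕ∞) D Ω)
    (hCR1 : ∀ p ∈ Ω, pds A p = - pdt D p)
    (hCR2 : ∀ p ∈ Ω, pdt A p = pds D p)
    (hCR3 : ∀ p ∈ Ω, pds B p = pdt C p)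
    (hCR4 : ∀ p ∈ Ω, pdt B p = - pds C p)
    (s₀ t₀ : ℝ) (hst₀ : (s₀, t₀) ∈ Ω)
    (hne₀ : det2 (xt A B (s₀, t₀)) (cmap C D (s₀, t₀)) ≠ 0)
    (I : Set ℝ) (U : Set (ℝ × ℝ)) (hI : IsOpen I) (hU : IsOpen U)
    (hs₀ : s₀ ∈ I) (hx₀ : xmap A B (s₀, t₀) ∈ U)
    (T : ℝ → ℝ × ℝ → ℝ)
    (hT : ContDiffOn ℝ (⊤ : ℕ∞) (fun q : ℝ × (ℝ × ℝ) => T q.1 q.2) (I ×ˢ U))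
    (hT₀ : T s₀ (xmap A B (s₀, t₀)) = t₀)
    (hTmem : ∀ s ∈ I, ∀ xb ∈ U, (s, T s xb) ∈ Ω)
    (hTeq : ∀ s ∈ I, ∀ xb ∈ U,
      det2 (xb - xmap A B (s, T s xb)) (cmap C D (s, T s xb)) = 0)
    (s : ℝ) (xb : ℝ × ℝ) (hs : s ∈ I) (hxb : xb ∈ U)
    (hx : xb = xmap A B (s, T s xb))
    (hδ : deltaMap A B (s, T s xb) = 0)
    (hne : det2 (xt A B (s, T s xb)) (cmap C D (s, T s xb)) ≠ 0)
    :
    deriv (fun s' => xmap A B (s', T s' xb)) s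
        = xs A B (s, T s xb) + (deriv (fun s' => T s' xb) s) • xt A B (s, T s xb) ∧
    xs A B (s, T s xb) + (deriv (fun s' => T s' xb) s) • xt A B (s, T s xb) = 0 ∧
    ∀ α : ℝ, xs A B (s, T s xb) + α • xt A B (s, T s xb) = 0 →
      α = deriv (fun s' => T s' xb) s := by
  have hmem := hTmem s hs xb hxb
  have hTd : HasDerivAt (fun s' => T s' xb) (deriv (fun s' => T s' xb) s) s := by
    have h1 : DifferentiableAt ℝ (fun q : ℝ × (ℝ × ℝ) => T q.1 q.2) (s, xb) :=
      (hT.contDiffAt ((hI.prod hU).mem_nhds ⟨hs, hxb⟩)).differentiableAt (by simp)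
    have h2 : DifferentiableAt ℝ (fun s' : ℝ => (s', xb)) s := by fun_prop
    have h3 : DifferentiableAt ℝ (fun s' => T s' xb) s :=
      DifferentiableAt.comp (f := fun s' : ℝ => (s', xb)) s h1 h2
    exact h3.hasDerivAt
  generalize ha : deriv (fun s' => T s' xb) s = a at hTd ⊢
  have key : ∀ f : ℝ × ℝ → ℝ, ContDiffOn ℝ (⊤ : ℕ∞) f Ω →
      HasDerivAt (fun s' => f (s', T s' xb))
        (pds f (s, T s xb) + a * pdt f (s, T s xb)) s := by
    intro f hf
    have h1 : DifferentiableAt ℝ f (s, T s xb) :=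
      (hf.contDiffAt (hΩ.mem_nhds hmem)).differentiableAt (by simp)
    have h2 : HasDerivAt (fun s' => (s', T s' xb)) ((1 : ℝ), a) s :=
      (hasDerivAt_id s).prodMk hTd
    have h3 := HasFDerivAt.comp_hasDerivAt (f := fun s' => (s', T s' xb)) s h1.hasFDerivAt h2
    have e : ((1 : ℝ), a) = (1, 0) + a • ((0 : ℝ), (1 : ℝ)) := by simp
    rw [e, map_add, map_smul] at h3
    exact h3
  have kA := key A hA
  have kB := key B hB
  have kC := key C hC
  have kD := key D hD
  have hF := ((kA.const_sub xb.1).mul kC).sub ((kB.const_sub xb.2).mul kD.neg)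
  have hF0 := (hF.congr_of_eventuallyEq (f₁ := fun _ => (0 : ℝ)) (by
    filter_upwards [hI.mem_nhds hs] with s' hs'
    have := hTeq s' hs' xb hxb
    simp only [det2, xmap, cmap, Prod.fst_sub, Prod.snd_sub] at this
    simpa using this.symm)).unique (hasDerivAt_const s (0 : ℝ))
  have hx1 : xb.1 = A (s, T s xb) := congrArg Prod.fst hx
  have hx2 : xb.2 = B (s, T s xb) := congrArg Prod.snd hx
  simp only [hx1, hx2, Prod.mk.eta, sub_self, Pi.neg_apply] at hF0
  simp only [deltaMap] at hδ
  simp only [det2, xt, cmap] at hne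
  have hp : pds A (s, T s xb) + a * pdt A (s, T s xb) = 0 := by
    apply (mul_eq_zero.1 _).resolve_right hne
    linear_combination (-pdt A (s, T s xb)) * hF0 + D (s, T s xb) * hδ
  have hq : pds B (s, T s xb) + a * pdt B (s, T s xb) = 0 := by
    apply (mul_eq_zero.1 _).resolve_right hne
    linear_combination (-pdt B (s, T s xb)) * hF0 - C (s, T s xb) * hδ
  have hz : xs A B (s, T s xb) + a • xt A B (s, T s xb) = 0 := by
    ext
    · simpa [xs, xt] using hp
    · simpa [xs, xt] using hq
  refine ⟨?_, hz, ?_⟩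
  · exact (kA.prodMk kB).deriv
  · intro α hα
    have h1 : pds A (s, T s xb) + α * pdt A (s, T s xb) = 0 := congrArg Prod.fst hα
    have h2 : pds B (s, T s xb) + α * pdt B (s, T s xb) = 0 := congrArg Prod.snd hα
    apply sub_eq_zero.1
    apply (mul_eq_zero.1 _).resolve_right hne
    linear_combination C (s, T s xb) * (h1 - hp) + D (s, T s xb) * (h2 - hq)
end
end

section
/- Let (s,x̄) ∈ I × U with x̄ = x(s,t(s,x̄)), δ(s,t(s,x̄)) = 0, and [x_t(s,t(s,x̄)), c(s,t(s,x̄))] ≠ 0. Then ∂/∂s(c(s,t(s,x̄))) = −(1 + t_s(s,x̄)²)·x_t(s,t(s,x̄)), and in particular ∂/∂s(c(s,t(s,x̄))) ≠ 0. (This is the computation proving that the generating family G is a versal unfolding at an A₂ point.) -/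
noncomputable section

theorem dsc_at_A2_point
    (Ω : Set (ℝ × ℝ)) (hΩ : IsOpen Ω)
    (A B C D : ℝ × ℝ → ℝ)
    (hA : ContDiffOn ℝ (⊤ : ℕ∞) A Ω) (hB : ContDiffOn ℝ (⊤ : ℕ∞) B Ω)
    (hC : ContDiffOn ℝ (⊤ : ℕ∞) C Ω) (hD : ContDiffOn ℝ (⊤ : ℕ∞) D Ω)
    (hCR1 : ∀ p ∈ Ω, pds A p = - pdt D p)
    (hCR2 : ∀ p ∈ Ω, pdt A p = pds D p)
    (hCR3 : ∀ p ∈ Ω, pds B p = pdt C p)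
    (hCR4 : ∀ p ∈ Ω, pdt B p = - pds C p)
    (s₀ t₀ : ℝ) (hst₀ : (s₀, t₀) ∈ Ω)
    (hne₀ : det2 (xt A B (s₀, t₀)) (cmap C D (s₀, t₀)) ≠ 0)
    (I : Set ℝ) (U : Set (ℝ × ℝ)) (hI : IsOpen I) (hU : IsOpen U)
    (hs₀ : s₀ ∈ I) (hx₀ : xmap A B (s₀, t₀) ∈ U)
    (T : ℝ → ℝ × ℝ → ℝ)
    (hT : ContDiffOn ℝ (⊤ : ℕ∞) (fun q : ℝ × (ℝ × ℝ) => T q.1 q.2) (I ×ˢ U))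
    (hT₀ : T s₀ (xmap A B (s₀, t₀)) = t₀)
    (hTmem : ∀ s ∈ I, ∀ xb ∈ U, (s, T s xb) ∈ Ω)
    (hTeq : ∀ s ∈ I, ∀ xb ∈ U,
      det2 (xb - xmap A B (s, T s xb)) (cmap C D (s, T s xb)) = 0)
    (s : ℝ) (xb : ℝ × ℝ) (hs : s ∈ I) (hxb : xb ∈ U)
    (hx : xb = xmap A B (s, T s xb))
    (hδ : deltaMap A B (s, T s xb) = 0)
    (hne : det2 (xt A B (s, T s xb)) (cmap C D (s, T s xb)) ≠ 0)
    :
    deriv (fun s' => cmap C D (s', T s' xb)) s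
        = (-(1 + (deriv (fun s' => T s' xb) s) ^ 2)) • xt A B (s, T s xb) ∧
    deriv (fun s' => cmap C D (s', T s' xb)) s ≠ 0 := by
  have hp : (s, T s xb) ∈ Ω := hTmem s hs xb hxb
  have hΩn : Ω ∈ nhds (s, T s xb) := hΩ.mem_nhds hp
  have hTd : DifferentiableAt ℝ (fun s' => T s' xb) s := by
    have h1 : DifferentiableAt ℝ (fun q : ℝ × (ℝ × ℝ) => T q.1 q.2) (s, xb) :=
      (hT.contDiffAt ((hI.prod hU).mem_nhds ⟨hs, hxb⟩)).differentiableAt (by simp)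
    have h2 : DifferentiableAt ℝ (fun s' : ℝ => (s', xb)) s := by fun_prop
    exact DifferentiableAt.comp (f := fun s' : ℝ => (s', xb)) s h1 h2
  have hτ := hTd.hasDerivAt
  set τ := deriv (fun s' => T s' xb) s with hτdef
  have key : ∀ f : ℝ × ℝ → ℝ, ContDiffOn ℝ (⊤ : ℕ∞) f Ω →
      HasDerivAt (fun s' => f (s', T s' xb))
        (pds f (s, T s xb) + τ * pdt f (s, T s xb)) s := by
    intro f hf
    have h1 : DifferentiableAt ℝ f (s, T s xb) :=
      (hf.contDiffAt hΩn).differentiableAt (by simp)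
    have h2 : HasDerivAt (fun s' => (s', T s' xb)) ((1 : ℝ), τ) s :=
      (hasDerivAt_id s).prodMk hτ
    have h3 := HasFDerivAt.comp_hasDerivAt (f := fun s' => (s', T s' xb)) s h1.hasFDerivAt h2
    have h4 : ((1 : ℝ), τ) = (1, 0) + τ • ((0 : ℝ), (1 : ℝ)) := by simp
    rw [h4, map_add, map_smul] at h3
    exact h3
  have kA := key A hA
  have kB := key B hB
  have kC := key C hC
  have kD := key D hD
  have hE : HasDerivAt (fun s' => det2 (xb - xmap A B (s', T s' xb)) (cmap C D (s', T s' xb))) _ s :=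
    ((kA.const_sub xb.1).mul kC).sub ((kB.const_sub xb.2).mul kD.neg)
  have hE0 : HasDerivAt (fun s' => det2 (xb - xmap A B (s', T s' xb)) (cmap C D (s', T s' xb))) 0 s := by
    refine (hasDerivAt_const s (0 : ℝ)).congr_of_eventuallyEq ?_
    filter_upwards [hI.mem_nhds hs] with s' hs'
    exact hTeq s' hs' xb hxb
  have heq := hE.unique hE0
  have hx1 : xb.1 = A (s, T s xb) := congrArg Prod.fst hx
  have hx2 : xb.2 = B (s, T s xb) := congrArg Prod.snd hx
  have hc : HasDerivAt (fun s' => cmap C D (s', T s' xb)) _ s := kD.neg.prodMk kC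
  rw [hc.deriv]
  have c1 := hCR1 _ hp
  have c2 := hCR2 _ hp
  have c3 := hCR3 _ hp
  have c4 := hCR4 _ hp
  rw [← hx1, ← hx2, sub_self, sub_self, zero_mul, zero_mul, add_zero, add_zero] at heq
  simp only [det2, xt, cmap, deltaMap] at heq hne hδ ⊢
  generalize T s xb = t at *
  have e1 : pds A (s, t) = -τ * pdt A (s, t) := by
    apply mul_right_cancel₀ hne
    linear_combination (-pdt A (s, t)) * heq - D (s, t) * hδ * (-1)
  have e2 : pds B (s, t) = -τ * pdt B (s, t) := by
    apply mul_right_cancel₀ hne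
    linear_combination (-pdt B (s, t)) * heq - C (s, t) * hδ
  have main : (-(pds D (s, t) + τ * pdt D (s, t)), pds C (s, t) + τ * pdt C (s, t))
      = (-(1 + τ ^ 2)) • (pdt A (s, t), pdt B (s, t)) := by
    ext
    · simp only [Prod.smul_mk, smul_eq_mul]
      linear_combination c2 - τ * c1 + τ * e1
    · simp only [Prod.smul_mk, smul_eq_mul]
      linear_combination c4 - τ * c3 + τ * e2
  refine ⟨main, ?_⟩
  rw [main]
  intro h0
  have hpos : -(1 + τ ^ 2) ≠ 0 := by nlinarith [sq_nonneg τ]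
  have hz := (smul_eq_zero.mp h0).resolve_left hpos
  rw [Prod.mk_eq_zero] at hz
  apply hne
  rw [hz.1, hz.2]
  ring
end
end

section
/- Let (s,x̄) ∈ I × U with x̄ = x(s,t(s,x̄)), δ(s,t(s,x̄)) = 0, ∂/∂s(δ(s,t(s,x̄))) = 0, and [x_t(s,t(s,x̄)), c(s,t(s,x̄))] ≠ 0. Then ∂²/∂s²(x(s,t(s,x̄))) = 0. -/
noncomputable section

theorem aux_linear (a1 b1 α β e f : ℝ) (h1 : a1 * f - b1 * e = 0) (h2 : a1 * β - α * b1 = 0)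
    (h : α * f - β * e ≠ 0) : a1 = 0 ∧ b1 = 0 := by
  constructor
  · have : a1 * (α * f - β * e) = 0 := by linear_combination α * h1 - e * h2
    exact (mul_eq_zero.mp this).resolve_right h
  · have : b1 * (α * f - β * e) = 0 := by linear_combination β * h1 - f * h2
    exact (mul_eq_zero.mp this).resolve_right h

theorem aux_two {I : Set ℝ} (hI : IsOpen I) {g : ℝ → ℝ}
    (hg : ContDiffOn ℝ (⊤ : ℕ∞) g I) {s : ℝ} (hs : s ∈ I) :
    HasDerivAt g (deriv g s) s ∧ HasDerivAt (deriv g) (deriv (deriv g) s) s := by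
  have h1 : ContDiffOn ℝ (⊤ : ℕ∞) (deriv g) I := hg.deriv_of_isOpen hI (by simp)
  exact ⟨((hg.contDiffAt (hI.mem_nhds hs)).differentiableAt (by simp)).hasDerivAt,
    ((h1.contDiffAt (hI.mem_nhds hs)).differentiableAt (by simp)).hasDerivAt⟩

theorem aux_curve {I : Set ℝ} (hI : IsOpen I) (a b e f α β : ℝ → ℝ) (x1 x2 : ℝ)
    (ha : ContDiffOn ℝ (⊤ : ℕ∞) a I) (hb : ContDiffOn ℝ (⊤ : ℕ∞) b I)
    (he : ContDiffOn ℝ (⊤ : ℕ∞) e I) (hf : ContDiffOn ℝ (⊤ : ℕ∞) f I)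
    (hα : ContDiffOn ℝ (⊤ : ℕ∞) α I) (hβ : ContDiffOn ℝ (⊤ : ℕ∞) β I)
    (heq : ∀ r ∈ I, (x1 - a r) * f r - (x2 - b r) * e r = 0)
    (s : ℝ) (hs : s ∈ I) (h1 : x1 = a s) (h2 : x2 = b s)
    (hδ : deriv a s * β s - α s * deriv b s = 0)
    (hδs : deriv (fun r => deriv a r * β r - α r * deriv b r) s = 0)
    (hne : α s * f s - β s * e s ≠ 0) :
    deriv (deriv a) s = 0 ∧ deriv (deriv b) s = 0 := by
  have first : ∀ r ∈ I, (-deriv a r) * f r + (x1 - a r) * deriv f r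
      - ((-deriv b r) * e r + (x2 - b r) * deriv e r) = 0 := by
    intro r hr
    have hd := ((((aux_two hI ha hr).1.const_sub x1).mul (aux_two hI hf hr).1).sub
      (((aux_two hI hb hr).1.const_sub x2).mul (aux_two hI he hr).1))
    refine hd.unique ((hasDerivAt_const r (0 : ℝ)).congr_of_eventuallyEq ?_)
    filter_upwards [hI.mem_nhds hr] with q hq
    exact heq q hq
  obtain ⟨a1, a2⟩ := aux_two hI ha hs
  obtain ⟨b1, b2⟩ := aux_two hI hb hs
  obtain ⟨e1, e2⟩ := aux_two hI he hs
  obtain ⟨f1, f2⟩ := aux_two hI hf hs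
  have hd := ((a2.neg.mul f1).add ((a1.const_sub x1).mul f2)).sub
    ((b2.neg.mul e1).add ((b1.const_sub x2).mul e2))
  have second := hd.unique ((hasDerivAt_const s (0 : ℝ)).congr_of_eventuallyEq (by
    filter_upwards [hI.mem_nhds hs] with q hq
    exact first q hq))
  have fs := first s hs
  obtain ⟨za, zb⟩ := aux_linear (deriv a s) (deriv b s) (α s) (β s) (e s) (f s)
    (by rw [h1, h2] at fs; linear_combination -fs) hδ hne
  have hdd := ((a2.mul (aux_two hI hβ hs).1).sub ((aux_two hI hα hs).1.mul b2)).deriv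
  have hdd' := hdd.symm.trans hδs
  simp only [za, zb, h1, h2, Pi.neg_apply] at second hdd'
  exact aux_linear _ _ (α s) (β s) (e s) (f s) (by linear_combination -second)
    (by linear_combination hdd') hne

theorem dssx_vanishes
    (Ω : Set (ℝ × ℝ)) (hΩ : IsOpen Ω)
    (A B C D : ℝ × ℝ → ℝ)
    (hA : ContDiffOn ℝ (⊤ : ℕ∞) A Ω) (hB : ContDiffOn ℝ (⊤ : ℕ∞) B Ω)
    (hC : ContDiffOn ℝ (⊤ : ℕ∞) C Ω) (hD : ContDiffOn ℝ (⊤ : ℕ∞) D Ω)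
    (hCR1 : ∀ p ∈ Ω, pds A p = - pdt D p)
    (hCR2 : ∀ p ∈ Ω, pdt A p = pds D p)
    (hCR3 : ∀ p ∈ Ω, pds B p = pdt C p)
    (hCR4 : ∀ p ∈ Ω, pdt B p = - pds C p)
    (s₀ t₀ : ℝ) (hst₀ : (s₀, t₀) ∈ Ω)
    (hne₀ : det2 (xt A B (s₀, t₀)) (cmap C D (s₀, t₀)) ≠ 0)
    (I : Set ℝ) (U : Set (ℝ × ℝ)) (hI : IsOpen I) (hU : IsOpen U)
    (hs₀ : s₀ ∈ I) (hx₀ : xmap A B (s₀, t₀) ∈ U)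
    (T : ℝ → ℝ × ℝ → ℝ)
    (hT : ContDiffOn ℝ (⊤ : ℕ∞) (fun q : ℝ × (ℝ × ℝ) => T q.1 q.2) (I ×ˢ U))
    (hT₀ : T s₀ (xmap A B (s₀, t₀)) = t₀)
    (hTmem : ∀ s ∈ I, ∀ xb ∈ U, (s, T s xb) ∈ Ω)
    (hTeq : ∀ s ∈ I, ∀ xb ∈ U,
      det2 (xb - xmap A B (s, T s xb)) (cmap C D (s, T s xb)) = 0)
    (s : ℝ) (xb : ℝ × ℝ) (hs : s ∈ I) (hxb : xb ∈ U)
    (hx : xb = xmap A B (s, T s xb))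
    (hδ : deltaMap A B (s, T s xb) = 0)
    (hδs : deriv (fun s' => deltaMap A B (s', T s' xb)) s = 0)
    (hne : det2 (xt A B (s, T s xb)) (cmap C D (s, T s xb)) ≠ 0)
    :
    deriv (deriv (fun s' => xmap A B (s', T s' xb))) s = 0 := by
  have hτ : ContDiffOn ℝ (⊤ : ℕ∞) (fun r => T r xb) I :=
    hT.comp (f := fun r : ℝ => (r, xb)) (by fun_prop) (fun r hr => ⟨hr, hxb⟩)
  have hp : ContDiffOn ℝ (⊤ : ℕ∞) (fun r => (r, T r xb)) I := contDiffOn_id.prodMk hτ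
  have hmem : Set.MapsTo (fun r => (r, T r xb)) I Ω := fun r hr => hTmem r hr xb hxb
  have hpdt : ∀ F : ℝ × ℝ → ℝ, ContDiffOn ℝ (⊤ : ℕ∞) F Ω →
      ContDiffOn ℝ (⊤ : ℕ∞) (fun r => pdt F (r, T r xb)) I := by
    intro F hF
    have h1 : ContDiffOn ℝ (⊤ : ℕ∞) (fderiv ℝ F) Ω := hF.fderiv_of_isOpen hΩ (by simp)
    exact (h1.comp hp hmem).clm_apply contDiffOn_const
  have hder : ∀ F : ℝ × ℝ → ℝ, ContDiffOn ℝ (⊤ : ℕ∞) F Ω → ∀ r ∈ I,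
      deriv (fun r => F (r, T r xb)) r
        = pds F (r, T r xb) + deriv (fun r => T r xb) r * pdt F (r, T r xb) := by
    intro F hF r hr
    have h1 : HasFDerivAt F (fderiv ℝ F (r, T r xb)) (r, T r xb) :=
      ((hF.contDiffAt (hΩ.mem_nhds (hmem hr))).differentiableAt (by simp)).hasFDerivAt
    have h2 : HasDerivAt (fun r => (r, T r xb)) (1, deriv (fun r => T r xb) r) r :=
      (hasDerivAt_id r).prodMk (aux_two hI hτ hr).1
    have h3 := (h1.comp_hasDerivAt r h2).deriv
    have h4 : ((1 : ℝ), deriv (fun r => T r xb) r)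
        = (1, 0) + deriv (fun r => T r xb) r • ((0 : ℝ), (1 : ℝ)) := by simp
    rw [h4, map_add, map_smul, smul_eq_mul] at h3
    exact h3
  have hδeq : ∀ r ∈ I, deltaMap A B (r, T r xb)
      = deriv (fun r => A (r, T r xb)) r * pdt B (r, T r xb)
        - pdt A (r, T r xb) * deriv (fun r => B (r, T r xb)) r := by
    intro r hr
    rw [hder A hA r hr, hder B hB r hr, deltaMap]
    ring
  have ha := hA.comp hp hmem
  have hb := hB.comp hp hmem
  have key := aux_curve hI (fun r => A (r, T r xb)) (fun r => B (r, T r xb))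
    (fun r => -D (r, T r xb)) (fun r => C (r, T r xb))
    (fun r => pdt A (r, T r xb)) (fun r => pdt B (r, T r xb)) xb.1 xb.2
    ha hb (hD.comp hp hmem).neg (hC.comp hp hmem) (hpdt A hA) (hpdt B hB)
    (fun r hr => hTeq r hr xb hxb) s hs (congrArg Prod.fst hx) (congrArg Prod.snd hx)
    (by rw [← hδeq s hs]; exact hδ)
    (by
      rw [← hδs]
      refine Filter.EventuallyEq.deriv_eq ?_
      filter_upwards [hI.mem_nhds hs] with r hr
      exact (hδeq r hr).symm)
    hne
  have hfirst : deriv (fun s' => xmap A B (s', T s' xb)) =ᶠ[nhds s]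
      fun r => (deriv (fun r => A (r, T r xb)) r, deriv (fun r => B (r, T r xb)) r) := by
    filter_upwards [hI.mem_nhds hs] with r hr
    exact ((aux_two hI ha hr).1.prodMk (aux_two hI hb hr).1).deriv
  rw [hfirst.deriv_eq]
  have h2 := ((aux_two hI ha hs).2.prodMk (aux_two hI hb hs).2).deriv
  refine h2.trans ?_
  exact Prod.ext key.1 key.2
end
end

section
/- Let (s,x̄) ∈ I × U with x̄ = x(s,t(s,x̄)), δ(s,t(s,x̄)) = 0, ∂/∂s(δ(s,t(s,x̄))) = 0, and [x_t(s,t(s,x̄)), c(s,t(s,x̄))] ≠ 0. Then G_ssss(s,x̄) = (1 + t_s(s,x̄)²)·∂²/∂s²(δ(s,t(s,x̄))). In particular, at such a point G_ssss(s,x̄) ≠ 0 if and only if ∂²/∂s²(δ(s,t(s,x̄))) ≠ 0. -/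
noncomputable section

theorem deriv_step {I : Set ℝ} (hI : IsOpen I) {F H H' : ℝ → ℝ}
    (h : ∀ s ∈ I, F s = H s) (hH : ∀ s ∈ I, HasDerivAt H (H' s) s) :
    ∀ s ∈ I, deriv F s = H' s := by
  intro s hs
  have : F =ᶠ[nhds s] H := by
    filter_upwards [hI.mem_nhds hs] with r hr using h r hr
  rw [this.deriv_eq, (hH s hs).deriv]

theorem smooth_deriv {I : Set ℝ} (hI : IsOpen I) {f : ℝ → ℝ}
    (hf : ContDiffOn ℝ (⊤ : ℕ∞) f I) :
    ContDiffOn ℝ (⊤ : ℕ∞) (deriv f) I ∧ ∀ s ∈ I, HasDerivAt f (deriv f s) s := by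
  refine ⟨hf.deriv_of_isOpen hI (by simp), fun s hs => ?_⟩
  exact ((hf.contDiffAt (hI.mem_nhds hs)).differentiableAt (by simp)).hasDerivAt

theorem abstract_formula (I : Set ℝ) (hI : IsOpen I)
    (a b p q τ d G u1 u2 v1 v2 : ℝ → ℝ) (α β : ℝ)
    (ha : ContDiffOn ℝ (⊤ : ℕ∞) a I) (hb : ContDiffOn ℝ (⊤ : ℕ∞) b I)
    (hp : ContDiffOn ℝ (⊤ : ℕ∞) p I) (hq : ContDiffOn ℝ (⊤ : ℕ∞) q I)
    (hτ : ContDiffOn ℝ (⊤ : ℕ∞) τ I) (hd : ContDiffOn ℝ (⊤ : ℕ∞) d I)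
    (da : ∀ s ∈ I, deriv a s = u1 s + τ s * v1 s)
    (db : ∀ s ∈ I, deriv b s = u2 s + τ s * v2 s)
    (dp : ∀ s ∈ I, deriv p s = - v1 s + τ s * u1 s)
    (dq : ∀ s ∈ I, deriv q s = - v2 s + τ s * u2 s)
    (hdd : ∀ s ∈ I, d s = u1 s * v2 s - v1 s * u2 s)
    (hG : ∀ s ∈ I, deriv G s = deriv a s * q s - deriv b s * p s)
    (hcon : ∀ s ∈ I, (α - a s) * q s - (β - b s) * p s = 0)
    (s : ℝ) (hs : s ∈ I) (hα : α = a s) (hβ : β = b s)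
    (hd0 : d s = 0) (hd1 : deriv d s = 0) (hne : v1 s * q s - v2 s * p s ≠ 0) :
    deriv (deriv (deriv (deriv G))) s = (1 + τ s ^ 2) * deriv (deriv d) s := by
  obtain ⟨ha1, Da⟩ := smooth_deriv hI ha
  obtain ⟨ha2, Da1⟩ := smooth_deriv hI ha1
  obtain ⟨hb1, Db⟩ := smooth_deriv hI hb
  obtain ⟨hb2, Db1⟩ := smooth_deriv hI hb1
  obtain ⟨hp1, Dp⟩ := smooth_deriv hI hp
  obtain ⟨hp2, Dp1⟩ := smooth_deriv hI hp1
  obtain ⟨hp3, Dp2⟩ := smooth_deriv hI hp2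
  obtain ⟨hp4, Dp3⟩ := smooth_deriv hI hp3
  obtain ⟨hq1, Dq⟩ := smooth_deriv hI hq
  obtain ⟨hq2, Dq1⟩ := smooth_deriv hI hq1
  obtain ⟨hq3, Dq2⟩ := smooth_deriv hI hq2
  obtain ⟨hq4, Dq3⟩ := smooth_deriv hI hq3
  obtain ⟨hτ1, Dτ⟩ := smooth_deriv hI hτ
  obtain ⟨hτ2, Dτ1⟩ := smooth_deriv hI hτ1
  obtain ⟨hd1', Dd⟩ := smooth_deriv hI hd
  obtain ⟨hd2', Dd1⟩ := smooth_deriv hI hd1'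
  generalize deriv (deriv d) = d2 at *
  generalize deriv d = d1 at *
  generalize deriv (deriv (deriv (deriv p))) = p4 at *
  generalize deriv (deriv (deriv p)) = p3 at *
  generalize deriv (deriv p) = p2 at *
  generalize deriv p = p1 at *
  generalize deriv (deriv (deriv (deriv q))) = q4 at *
  generalize deriv (deriv (deriv q)) = q3 at *
  generalize deriv (deriv q) = q2 at *
  generalize deriv q = q1 at *
  generalize deriv (deriv a) = a2 at *
  generalize deriv a = a1 at *
  generalize deriv (deriv b) = b2 at *
  generalize deriv b = b1 at *
  generalize deriv (deriv τ) = τ2 at *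
  generalize deriv τ = τ1 at *
  -- first derivative of the constraint
  have k1 := deriv_step hI (F := fun _ => (0 : ℝ)) (fun r hr => (hcon r hr).symm)
    (fun r hr => ((((Da r hr).const_sub α).mul (Dq r hr)).sub
      (((Db r hr).const_sub β).mul (Dp r hr))))
  simp only [deriv_const] at k1
  -- second
  have k2 := deriv_step hI (F := fun _ => (0 : ℝ)) k1
    (fun r hr => ((((Da1 r hr).neg.mul (Dq r hr)).add
        (((Da r hr).const_sub α).mul (Dq1 r hr))).sub
      (((Db1 r hr).neg.mul (Dp r hr)).add (((Db r hr).const_sub β).mul (Dp1 r hr)))))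
  simp only [deriv_const] at k2
  -- the bracket [X', c']
  have e0 : ∀ r ∈ I, (1 + τ r * τ r) * d r = b1 r * p1 r - a1 r * q1 r := by
    intro r hr
    rw [da r hr, db r hr, dp r hr, dq r hr, hdd r hr]; ring
  have De : ∀ r ∈ I, HasDerivAt (fun r => (1 + τ r * τ r) * d r)
      ((τ1 r * τ r + τ r * τ1 r) * d r + (1 + τ r * τ r) * d1 r) r := fun r hr =>
    (((Dτ r hr).mul (Dτ r hr)).const_add 1).mul (Dd r hr)
  have e1 : ∀ r ∈ I, (τ1 r * τ r + τ r * τ1 r) * d r + (1 + τ r * τ r) * d1 r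
      = b2 r * p1 r + b1 r * p2 r - (a2 r * q1 r + a1 r * q2 r) := by
    intro r hr
    have := deriv_step hI e0 (fun r hr => ((Db1 r hr).mul (Dp1 r hr)).sub
      ((Da1 r hr).mul (Dq1 r hr))) r hr
    rw [(De r hr).deriv] at this
    exact this
  have De1 : ∀ r ∈ I, HasDerivAt
      (fun r => (τ1 r * τ r + τ r * τ1 r) * d r + (1 + τ r * τ r) * d1 r)
      (((τ2 r * τ r + τ1 r * τ1 r) + (τ1 r * τ1 r + τ r * τ2 r)) * d r
        + (τ1 r * τ r + τ r * τ1 r) * d1 r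
        + ((τ1 r * τ r + τ r * τ1 r) * d1 r + (1 + τ r * τ r) * d2 r)) r := fun r hr =>
    ((((Dτ1 r hr).mul (Dτ r hr)).add ((Dτ r hr).mul (Dτ1 r hr))).mul (Dd r hr)).add
      ((((Dτ r hr).mul (Dτ r hr)).const_add 1).mul (Dd1 r hr))
  -- derivatives of G
  have g1 : ∀ r ∈ I, deriv G r = (α - a r) * q1 r - (β - b r) * p1 r := by
    intro r hr
    rw [hG r hr]; linarith [k1 r hr]
  have g2 : ∀ r ∈ I, deriv (deriv G) r =
      (1 + τ r * τ r) * d r + ((α - a r) * q2 r - (β - b r) * p2 r) := by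
    intro r hr
    rw [deriv_step hI g1 (fun r hr => ((((Da r hr).const_sub α).mul (Dq1 r hr)).sub
      (((Db r hr).const_sub β).mul (Dp1 r hr)))) r hr, e0 r hr]
    ring
  have g3 := deriv_step hI g2 (fun r hr => (De r hr).add
    ((((Da r hr).const_sub α).mul (Dq2 r hr)).sub
      (((Db r hr).const_sub β).mul (Dp2 r hr))))
  have g4 := deriv_step hI g3 (fun r hr => (De1 r hr).add
    ((((Da1 r hr).neg.mul (Dq2 r hr)).add
        (((Da r hr).const_sub α).mul (Dq3 r hr))).sub
      (((Db1 r hr).neg.mul (Dp2 r hr)).add (((Db r hr).const_sub β).mul (Dp3 r hr))))) s hs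
  rw [g4]
  have Es : 0 = u1 s * v2 s - v1 s * u2 s := hd0.symm.trans (hdd s hs)
  have k1s := k1 s hs
  have k2s := k2 s hs
  have e1s := e1 s hs
  simp only [Pi.neg_apply, hd0, hd1, hα, hβ] at *
  have das := da s hs
  have dbs := db s hs
  have dps := dp s hs
  have dqs := dq s hs
  clear * - k1s k2s e1s das dbs dps dqs hne Es
  have A0 : a1 s = 0 := by
    have : a1 s * (v1 s * q s - v2 s * p s) = 0 := by
      have h1 : a1 s * q s = b1 s * p s := by linarith
      have h2 : a1 s * v2 s = b1 s * v1 s := by rw [das, dbs]; linarith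
      linear_combination v1 s * h1 - p s * h2
    exact (mul_eq_zero.mp this).resolve_right hne
  have B0 : b1 s = 0 := by
    have : b1 s * (v1 s * q s - v2 s * p s) = 0 := by
      have h1 : a1 s * q s = b1 s * p s := by linarith
      have h2 : a1 s * v2 s = b1 s * v1 s := by rw [das, dbs]; linarith
      linear_combination v2 s * h1 - q s * h2
    exact (mul_eq_zero.mp this).resolve_right hne
  have P1 : p1 s = -(1 + τ s ^ 2) * v1 s := by
    rw [A0] at das; linear_combination dps - τ s * das
  have Q1 : q1 s = -(1 + τ s ^ 2) * v2 s := by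
    rw [B0] at dbs; linear_combination dqs - τ s * dbs
  have hpos : (1 + τ s ^ 2) ≠ 0 := by positivity
  have h3 : a2 s * q s = b2 s * p s := by
    rw [A0, B0] at k2s; linarith
  have h4 : a2 s * v2 s = b2 s * v1 s := by
    rw [A0, B0, P1, Q1] at e1s
    apply mul_left_cancel₀ hpos
    linarith
  have A2 : a2 s = 0 := by
    have : a2 s * (v1 s * q s - v2 s * p s) = 0 := by
      linear_combination v1 s * h3 - p s * h4
    exact (mul_eq_zero.mp this).resolve_right hne
  have B2 : b2 s = 0 := by
    have : b2 s * (v1 s * q s - v2 s * p s) = 0 := by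
      linear_combination v2 s * h3 - q s * h4
    exact (mul_eq_zero.mp this).resolve_right hne
  rw [A0, B0, A2, B2]
  ring

theorem curve_deriv {Ω : Set (ℝ × ℝ)} (hΩ : IsOpen Ω) {f : ℝ × ℝ → ℝ}
    (hf : ContDiffOn ℝ (⊤ : ℕ∞) f Ω) {S : ℝ → ℝ} {r S' : ℝ} (hS : HasDerivAt S S' r)
    (hr : (r, S r) ∈ Ω) :
    deriv (fun r => f (r, S r)) r = pds f (r, S r) + S' * pdt f (r, S r) := by
  have h1 : HasFDerivAt f (fderiv ℝ f (r, S r)) (r, S r) :=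
    ((hf.contDiffAt (hΩ.mem_nhds hr)).differentiableAt (by simp)).hasFDerivAt
  have h2 : HasDerivAt (fun r => (r, S r)) ((1 : ℝ), S') r := (hasDerivAt_id r).prodMk hS
  have h3 := HasFDerivAt.comp_hasDerivAt r h1 h2
  have h4 : ((1 : ℝ), S') = (1, 0) + S' • ((0 : ℝ), (1 : ℝ)) := by simp
  have h5 := h3.deriv
  rw [h4, map_add, map_smul, smul_eq_mul] at h5
  exact h5

theorem smooth_pd {Ω : Set (ℝ × ℝ)} (hΩ : IsOpen Ω) {f : ℝ × ℝ → ℝ}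
    (hf : ContDiffOn ℝ (⊤ : ℕ∞) f Ω) (v : ℝ × ℝ) :
    ContDiffOn ℝ (⊤ : ℕ∞) (fun p => fderiv ℝ f p v) Ω :=
  (hf.fderiv_of_isOpen hΩ (by simp)).clm_apply contDiffOn_const

theorem Gssss_formula
    (Ω : Set (ℝ × ℝ)) (hΩ : IsOpen Ω)
    (A B C D : ℝ × ℝ → ℝ)
    (hA : ContDiffOn ℝ (⊤ : ℕ∞) A Ω) (hB : ContDiffOn ℝ (⊤ : ℕ∞) B Ω)
    (hC : ContDiffOn ℝ (⊤ : ℕ∞) C Ω) (hD : ContDiffOn ℝ (⊤ : ℕ∞) D Ω)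
    (hCR1 : ∀ p ∈ Ω, pds A p = - pdt D p)
    (hCR2 : ∀ p ∈ Ω, pdt A p = pds D p)
    (hCR3 : ∀ p ∈ Ω, pds B p = pdt C p)
    (hCR4 : ∀ p ∈ Ω, pdt B p = - pds C p)
    (g : ℝ × ℝ → ℝ) (hg : ContDiffOn ℝ (⊤ : ℕ∞) g Ω)
    (hgs : ∀ p ∈ Ω, pds g p = det2 (xs A B p) (cmap C D p))
    (hgt : ∀ p ∈ Ω, pdt g p = det2 (xt A B p) (cmap C D p))
    (s₀ t₀ : ℝ) (hst₀ : (s₀, t₀) ∈ Ω)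
    (hne₀ : det2 (xt A B (s₀, t₀)) (cmap C D (s₀, t₀)) ≠ 0)
    (I : Set ℝ) (U : Set (ℝ × ℝ)) (hI : IsOpen I) (hU : IsOpen U)
    (hs₀ : s₀ ∈ I) (hx₀ : xmap A B (s₀, t₀) ∈ U)
    (T : ℝ → ℝ × ℝ → ℝ)
    (hT : ContDiffOn ℝ (⊤ : ℕ∞) (fun q : ℝ × (ℝ × ℝ) => T q.1 q.2) (I ×ˢ U))
    (hT₀ : T s₀ (xmap A B (s₀, t₀)) = t₀)
    (hTmem : ∀ s ∈ I, ∀ xb ∈ U, (s, T s xb) ∈ Ω)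
    (hTeq : ∀ s ∈ I, ∀ xb ∈ U,
      det2 (xb - xmap A B (s, T s xb)) (cmap C D (s, T s xb)) = 0)
    (s : ℝ) (xb : ℝ × ℝ) (hs : s ∈ I) (hxb : xb ∈ U)
    (hx : xb = xmap A B (s, T s xb))
    (hδ : deltaMap A B (s, T s xb) = 0)
    (hδs : deriv (fun s' => deltaMap A B (s', T s' xb)) s = 0)
    (hne : det2 (xt A B (s, T s xb)) (cmap C D (s, T s xb)) ≠ 0)
    :
    deriv (deriv (deriv (deriv (fun s' => g (s', T s' xb))))) s
        = (1 + (deriv (fun s' => T s' xb) s) ^ 2)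
            * deriv (deriv (fun s' => deltaMap A B (s', T s' xb))) s ∧
    (deriv (deriv (deriv (deriv (fun s' => g (s', T s' xb))))) s ≠ 0 ↔
      deriv (deriv (fun s' => deltaMap A B (s', T s' xb))) s ≠ 0) := by
  have hS : ContDiffOn ℝ (⊤ : ℕ∞) (fun r => T r xb) I :=
    hT.comp (f := fun r : ℝ => (r, xb)) (contDiff_id.prodMk contDiff_const).contDiffOn
      (fun r hr => ⟨hr, hxb⟩)
  have hγ : ContDiffOn ℝ (⊤ : ℕ∞) (fun r => (r, T r xb)) I := contDiffOn_id.prodMk hS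
  have hm : Set.MapsTo (fun r => (r, T r xb)) I Ω := fun r hr => hTmem r hr xb hxb
  obtain ⟨hτ, DS⟩ := smooth_deriv hI hS
  have hδsm : ContDiffOn ℝ (⊤ : ℕ∞) (deltaMap A B) Ω :=
    ((smooth_pd hΩ hA (1, 0)).mul (smooth_pd hΩ hB (0, 1))).sub
      ((smooth_pd hΩ hA (0, 1)).mul (smooth_pd hΩ hB (1, 0)))
  have main := abstract_formula I hI (fun r => A (r, T r xb)) (fun r => B (r, T r xb))
    (fun r => - D (r, T r xb)) (fun r => C (r, T r xb)) (deriv (fun r => T r xb))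
    (fun r => deltaMap A B (r, T r xb)) (fun r => g (r, T r xb))
    (fun r => pds A (r, T r xb)) (fun r => pds B (r, T r xb))
    (fun r => pdt A (r, T r xb)) (fun r => pdt B (r, T r xb)) xb.1 xb.2
    (hA.comp hγ hm) (hB.comp hγ hm) (hD.comp hγ hm).neg (hC.comp hγ hm) hτ
    (hδsm.comp hγ hm)
    (fun r hr => curve_deriv hΩ hA (DS r hr) (hm hr))
    (fun r hr => curve_deriv hΩ hB (DS r hr) (hm hr))
    (fun r hr => by
      have h := curve_deriv hΩ hD (DS r hr) (hm hr)
      have h' : deriv (fun r => - D (r, T r xb)) r = - deriv (fun r => D (r, T r xb)) r :=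
        deriv.fun_neg
      rw [h', h, hCR1 _ (hm hr), hCR2 _ (hm hr)]; ring)
    (fun r hr => by
      rw [curve_deriv hΩ hC (DS r hr) (hm hr), hCR3 _ (hm hr), hCR4 _ (hm hr)]; ring)
    (fun r hr => rfl)
    (fun r hr => by
      rw [curve_deriv hΩ hg (DS r hr) (hm hr), curve_deriv hΩ hA (DS r hr) (hm hr),
        curve_deriv hΩ hB (DS r hr) (hm hr), hgs _ (hm hr), hgt _ (hm hr)]
      simp only [det2, xs, xt, cmap]; ring)
    (fun r hr => hTeq r hr xb hxb)
    s hs (congrArg Prod.fst hx) (congrArg Prod.snd hx) hδ hδs hne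
  refine ⟨main, ?_⟩
  rw [main]
  have hpos : (1 + (deriv (fun s' => T s' xb) s) ^ 2) ≠ 0 := by positivity
  simp [hpos]
end
end

section
/- Let (s,t) ∈ Ω and suppose x_s(s,t) + λ·x_t(s,t) = 0 for some λ ∈ ℝ. Then δ_t(s,t) = −[x_t(s,t), x_st(s,t) + λ·x_tt(s,t)]. In particular, if δ_t(s,t) ≠ 0 then [x_t(s,t), x_st(s,t) + λ·x_tt(s,t)] ≠ 0. (This is the computation proving that the generating family G is a versal unfolding at an A₃ point.) -/
noncomputable section

theorem deltat_formula_A3_versality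
    (Ω : Set (ℝ × ℝ)) (hΩ : IsOpen Ω)
    (A B C D : ℝ × ℝ → ℝ)
    (hA : ContDiffOn ℝ (⊤ : ℕ∞) A Ω) (hB : ContDiffOn ℝ (⊤ : ℕ∞) B Ω)
    (hC : ContDiffOn ℝ (⊤ : ℕ∞) C Ω) (hD : ContDiffOn ℝ (⊤ : ℕ∞) D Ω)
    (hCR1 : ∀ p ∈ Ω, pds A p = - pdt D p)
    (hCR2 : ∀ p ∈ Ω, pdt A p = pds D p)
    (hCR3 : ∀ p ∈ Ω, pds B p = pdt C p)
    (hCR4 : ∀ p ∈ Ω, pdt B p = - pds C p)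
    (p : ℝ × ℝ) (hp : p ∈ Ω) (lam : ℝ)
    (hlam : xs A B p + lam • xt A B p = 0)
    :
    pdt (deltaMap A B) p
        = - det2 (xt A B p)
            ((pdt (pds A) p, pdt (pds B) p) + lam • (pdt (pdt A) p, pdt (pdt B) p)) ∧
    (pdt (deltaMap A B) p ≠ 0 →
      det2 (xt A B p)
        ((pdt (pds A) p, pdt (pds B) p) + lam • (pdt (pdt A) p, pdt (pdt B) p)) ≠ 0) := by
  have key : ∀ f : ℝ × ℝ → ℝ, ContDiffOn ℝ (⊤ : ℕ∞) f Ω → ∀ v : ℝ × ℝ,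
      DifferentiableAt ℝ (fun q => fderiv ℝ f q v) p := by
    intro f hf v
    have h1 : ContDiffAt ℝ (⊤ : ℕ∞) f p := hf.contDiffAt (hΩ.mem_nhds hp)
    have h2 : ContDiffAt ℝ 1 (fderiv ℝ f) p := h1.fderiv_right (by norm_cast)
    have h3 : DifferentiableAt ℝ (fderiv ℝ f) p := h2.differentiableAt (by norm_num)
    exact h3.clm_apply (differentiableAt_const v)
  have a1 : DifferentiableAt ℝ (pds A) p := key A hA (1, 0)
  have a2 : DifferentiableAt ℝ (pdt A) p := key A hA (0, 1)
  have b1 : DifferentiableAt ℝ (pds B) p := key B hB (1, 0)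
  have b2 : DifferentiableAt ℝ (pdt B) p := key B hB (0, 1)
  have hd : pdt (deltaMap A B) p = pds A p * pdt (pdt B) p + pdt B p * pdt (pds A) p
      - (pdt A p * pdt (pds B) p + pds B p * pdt (pdt A) p) := by
    have h := ((a1.hasFDerivAt.mul b2.hasFDerivAt).sub
      (a2.hasFDerivAt.mul b1.hasFDerivAt)).fderiv
    have h' := congrArg (fun L => L ((0 : ℝ), (1 : ℝ))) h
    exact h'
  have e1 : pds A p + lam * pdt A p = 0 := congrArg Prod.fst hlam
  have e2 : pds B p + lam * pdt B p = 0 := congrArg Prod.snd hlam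
  have main : pdt (deltaMap A B) p
        = - det2 (xt A B p)
            ((pdt (pds A) p, pdt (pds B) p) + lam • (pdt (pdt A) p, pdt (pdt B) p)) := by
    rw [hd]
    simp only [det2, xt, Prod.smul_mk, Prod.mk_add_mk, smul_eq_mul]
    linear_combination pdt (pdt B) p * e1 - pdt (pdt A) p * e2
  refine ⟨main, fun hne h0 => hne ?_⟩
  rw [main, h0, neg_zero]
end
end

section
/- Let I ⊆ ℝ be open and let τ : I → ℝ be a smooth function such that for all s ∈ I: (s,τ(s)) ∈ Ω, δ(s,τ(s)) = 0, and x_t(s,τ(s)) ≠ 0, and let α : I → ℝ be smooth with x_s(s,τ(s)) + α(s)·x_t(s,τ(s)) = 0 for all s ∈ I, and set γ(s) = x(s,τ(s)). Fix s ∈ I with δ_t(s,τ(s)) ≠ 0. If α(s) = τ'(s) but α'(s) ≠ τ''(s), then γ'(s) = 0 and [γ''(s), γ'''(s)] ≠ 0; that is, γ has an ordinary cusp at x(s,τ(s)). -/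
noncomputable section

theorem pd_smooth {f : ℝ × ℝ → ℝ} {Ω : Set (ℝ × ℝ)} (hΩ : IsOpen Ω)
    (hf : ContDiffOn ℝ (⊤ : ℕ∞) f Ω) (w : ℝ × ℝ) :
    ContDiffOn ℝ (⊤ : ℕ∞) (fun p => fderiv ℝ f p w) Ω :=
  (hf.fderiv_of_isOpen hΩ (by simp)).clm_apply contDiffOn_const

theorem pd_symm {f : ℝ × ℝ → ℝ} {Ω : Set (ℝ × ℝ)} (hΩ : IsOpen Ω)
    (hf : ContDiffOn ℝ (⊤ : ℕ∞) f Ω) {p : ℝ × ℝ} (hp : p ∈ Ω) :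
    pdt (pds f) p = pds (pdt f) p := by
  have hfa : ContDiffAt ℝ (⊤ : ℕ∞) f p := hf.contDiffAt (hΩ.mem_nhds hp)
  have hsym : IsSymmSndFDerivAt ℝ f p := by
    apply hfa.isSymmSndFDerivAt
    simp only [minSmoothness_of_isRCLikeNormedField]
    exact WithTop.coe_le_coe.mpr (le_top : (2 : ℕ∞) ≤ ⊤)
  have hd : DifferentiableAt ℝ (fderiv ℝ f) p :=
    ((hf.fderiv_of_isOpen (m := (⊤ : ℕ∞)) hΩ (by simp)).contDiffAt
      (hΩ.mem_nhds hp)).differentiableAt (by simp)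
  have key : ∀ w u : ℝ × ℝ, fderiv ℝ (fun q => fderiv ℝ f q w) p u
      = fderiv ℝ (fderiv ℝ f) p u w := by
    intro w u
    rw [fderiv_clm_apply hd (differentiableAt_const w)]
    simp
  change fderiv ℝ (fun q => fderiv ℝ f q (1, 0)) p (0, 1)
    = fderiv ℝ (fun q => fderiv ℝ f q (0, 1)) p (1, 0)
  rw [key, key]
  exact hsym _ _

theorem curve_deriv_s18 {f : ℝ × ℝ → ℝ} {τ : ℝ → ℝ} {s : ℝ}
    (hf : DifferentiableAt ℝ f (s, τ s)) (hτ : DifferentiableAt ℝ τ s) :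
    HasDerivAt (fun s' => f (s', τ s'))
      (pds f (s, τ s) + deriv τ s * pdt f (s, τ s)) s := by
  have h1 : HasDerivAt (fun s' => (s', τ s')) ((1 : ℝ), deriv τ s) s :=
    (hasDerivAt_id s).prodMk hτ.hasDerivAt
  have h2 := HasFDerivAt.comp_hasDerivAt s (f := fun s' => (s', τ s')) hf.hasFDerivAt h1
  have h3 : ((1 : ℝ), deriv τ s) = (1, 0) + deriv τ s • (0, 1) := by simp
  rw [h3, map_add, map_smul] at h2
  exact h2

theorem image_of_singular_set_ordinary_cusp
    (Ω : Set (ℝ × ℝ)) (hΩ : IsOpen Ω)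
    (A B C D : ℝ × ℝ → ℝ)
    (hA : ContDiffOn ℝ (⊤ : ℕ∞) A Ω) (hB : ContDiffOn ℝ (⊤ : ℕ∞) B Ω)
    (hC : ContDiffOn ℝ (⊤ : ℕ∞) C Ω) (hD : ContDiffOn ℝ (⊤ : ℕ∞) D Ω)
    (hCR1 : ∀ p ∈ Ω, pds A p = - pdt D p)
    (hCR2 : ∀ p ∈ Ω, pdt A p = pds D p)
    (hCR3 : ∀ p ∈ Ω, pds B p = pdt C p)
    (hCR4 : ∀ p ∈ Ω, pdt B p = - pds C p)
    (I : Set ℝ) (hI : IsOpen I) (τ : ℝ → ℝ) (hτ : ContDiffOn ℝ (⊤ : ℕ∞) τ I)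
    (hmem : ∀ s ∈ I, (s, τ s) ∈ Ω)
    (hδ : ∀ s ∈ I, deltaMap A B (s, τ s) = 0)
    (hxt : ∀ s ∈ I, xt A B (s, τ s) ≠ 0)
    (α : ℝ → ℝ) (hαsm : ContDiffOn ℝ (⊤ : ℕ∞) α I)
    (hα : ∀ s ∈ I, xs A B (s, τ s) + α s • xt A B (s, τ s) = 0)
    (s : ℝ) (hs : s ∈ I)
    (hδt : pdt (deltaMap A B) (s, τ s) ≠ 0)
    (h1 : α s = deriv τ s)
    (h2 : deriv α s ≠ deriv (deriv τ) s)
    :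
    deriv (fun s' => xmap A B (s', τ s')) s = 0 ∧
    det2 (deriv (deriv (fun s' => xmap A B (s', τ s'))) s)
        (deriv (deriv (deriv (fun s' => xmap A B (s', τ s')))) s) ≠ 0 := by
  have hA' := pd_smooth hΩ hA (0, 1)
  have hB' := pd_smooth hΩ hB (0, 1)
  have hAs' := pd_smooth hΩ hA (1, 0)
  have hBs' := pd_smooth hΩ hB (1, 0)
  have dΩ : ∀ {f : ℝ × ℝ → ℝ}, ContDiffOn ℝ (⊤ : ℕ∞) f Ω → ∀ p ∈ Ω, DifferentiableAt ℝ f p :=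
    fun hf p hp => (hf.contDiffAt (hΩ.mem_nhds hp)).differentiableAt (by simp)
  have dI : ∀ {f : ℝ → ℝ}, ContDiffOn ℝ (⊤ : ℕ∞) f I → ∀ p ∈ I, HasDerivAt f (deriv f p) p :=
    fun hf p hp => ((hf.contDiffAt (hI.mem_nhds hp)).differentiableAt (by simp)).hasDerivAt
  have sI : ∀ {f : ℝ → ℝ}, ContDiffOn ℝ (⊤ : ℕ∞) f I → ContDiffOn ℝ (⊤ : ℕ∞) (deriv f) I :=
    fun hf => hf.deriv_of_isOpen hI (by simp)
  have hcurve : ContDiffOn ℝ (⊤ : ℕ∞) (fun s' => (s', τ s')) I := contDiffOn_id.prodMk hτ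
  obtain ⟨a, ha⟩ : ∃ a : ℝ → ℝ, a = fun s' => pdt A (s', τ s') := ⟨_, rfl⟩
  obtain ⟨b, hb⟩ : ∃ b : ℝ → ℝ, b = fun s' => pdt B (s', τ s') := ⟨_, rfl⟩
  obtain ⟨β, hβ⟩ : ∃ β : ℝ → ℝ, β = fun s' => deriv τ s' - α s' := ⟨_, rfl⟩
  have sa : ContDiffOn ℝ (⊤ : ℕ∞) a I := by
    rw [ha]; exact hA'.comp hcurve hmem
  have sb : ContDiffOn ℝ (⊤ : ℕ∞) b I := by
    rw [hb]; exact hB'.comp hcurve hmem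
  have sβ : ContDiffOn ℝ (⊤ : ℕ∞) β I := by
    rw [hβ]; exact (sI hτ).sub hαsm
  have hα1 : ∀ u ∈ I, pds A (u, τ u) = - (α u * pdt A (u, τ u)) := by
    intro u hu
    have := congrArg Prod.fst (hα u hu)
    simp [xs, xt] at this
    linarith
  have hα2 : ∀ u ∈ I, pds B (u, τ u) = - (α u * pdt B (u, τ u)) := by
    intro u hu
    have := congrArg Prod.snd (hα u hu)
    simp [xs, xt] at this
    linarith
  have D1 : ∀ u ∈ I, deriv (fun s' => xmap A B (s', τ s')) u = (β u * a u, β u * b u) := by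
    intro u hu
    have e1 := curve_deriv_s18 (dΩ hA _ (hmem u hu)) (dI hτ u hu).differentiableAt
    have e2 := curve_deriv_s18 (dΩ hB _ (hmem u hu)) (dI hτ u hu).differentiableAt
    have := (e1.prodMk e2).deriv
    unfold xmap
    rw [this, hα1 u hu, hα2 u hu, ha, hb, hβ]
    ext <;> simp only <;> ring
  have D2 : ∀ u ∈ I, deriv (deriv (fun s' => xmap A B (s', τ s'))) u
      = (deriv β u * a u + β u * deriv a u, deriv β u * b u + β u * deriv b u) := by
    intro u hu
    have he : deriv (fun s' => xmap A B (s', τ s')) =ᶠ[nhds u]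
        fun u => (β u * a u, β u * b u) := by
      filter_upwards [hI.mem_nhds hu] with v hv using D1 v hv
    rw [he.deriv_eq]
    exact (((dI sβ u hu).mul (dI sa u hu)).prodMk ((dI sβ u hu).mul (dI sb u hu))).deriv
  have D3 : deriv (deriv (deriv (fun s' => xmap A B (s', τ s')))) s
      = ((deriv (deriv β) s * a s + deriv β s * deriv a s)
          + (deriv β s * deriv a s + β s * deriv (deriv a) s),
         (deriv (deriv β) s * b s + deriv β s * deriv b s)
          + (deriv β s * deriv b s + β s * deriv (deriv b) s)) := by
    have he : deriv (deriv (fun s' => xmap A B (s', τ s'))) =ᶠ[nhds s]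
        fun u => (deriv β u * a u + β u * deriv a u, deriv β u * b u + β u * deriv b u) := by
      filter_upwards [hI.mem_nhds hs] with v hv using D2 v hv
    rw [he.deriv_eq]
    have q := dI sβ s hs
    have q' := dI (sI sβ) s hs
    exact (((q'.mul (dI sa s hs)).add (q.mul (dI (sI sa) s hs))).prodMk
      ((q'.mul (dI sb s hs)).add (q.mul (dI (sI sb) s hs)))).deriv
  have hβ0 : β s = 0 := by rw [hβ]; simp [h1]
  have hβ1 : deriv β s ≠ 0 := by
    have : deriv β s = deriv (deriv τ) s - deriv α s := by
      rw [hβ]; exact ((dI (sI hτ) s hs).sub (dI hαsm s hs)).deriv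
    rw [this]
    exact sub_ne_zero.mpr h2.symm
  have hp := hmem s hs
  have a' : deriv a s = pds (pdt A) (s, τ s) + deriv τ s * pdt (pdt A) (s, τ s) := by
    rw [ha]
    exact (curve_deriv_s18 (f := pdt A) (dΩ hA' _ hp) (dI hτ s hs).differentiableAt).deriv
  have b' : deriv b s = pds (pdt B) (s, τ s) + deriv τ s * pdt (pdt B) (s, τ s) := by
    rw [hb]
    exact (curve_deriv_s18 (f := pdt B) (dΩ hB' _ hp) (dI hτ s hs).differentiableAt).deriv
  have hδ' : pdt (deltaMap A B) (s, τ s) = -(a s * deriv b s - b s * deriv a s) := by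
    have e1 : HasFDerivAt (pds A) _ (s, τ s) := (dΩ hAs' _ hp).hasFDerivAt
    have e2 : HasFDerivAt (pdt A) _ (s, τ s) := (dΩ hA' _ hp).hasFDerivAt
    have e3 : HasFDerivAt (pds B) _ (s, τ s) := (dΩ hBs' _ hp).hasFDerivAt
    have e4 : HasFDerivAt (pdt B) _ (s, τ s) := (dΩ hB' _ hp).hasFDerivAt
    have e : HasFDerivAt (deltaMap A B) _ (s, τ s) := (e1.mul e4).sub (e2.mul e3)
    have e' : pdt (deltaMap A B) (s, τ s) =
        (pds A (s, τ s) * pdt (pdt B) (s, τ s) + pdt B (s, τ s) * pdt (pds A) (s, τ s))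
        - (pdt A (s, τ s) * pdt (pds B) (s, τ s) + pds B (s, τ s) * pdt (pdt A) (s, τ s)) := by
      rw [pdt, e.fderiv]
      rfl
    rw [e', a', b', pd_symm hΩ hA hp, pd_symm hΩ hB hp, hα1 s hs, hα2 s hs, h1, ha, hb]
    ring
  refine ⟨?_, ?_⟩
  · rw [D1 s hs, hβ0]; simp
  · rw [D2 s hs, D3, hβ0]
    have : a s * deriv b s - b s * deriv a s ≠ 0 := by
      intro h
      apply hδt
      rw [hδ', h, neg_zero]
    have h3 := mul_ne_zero (mul_ne_zero two_ne_zero (pow_ne_zero 2 hβ1)) this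
    intro h
    apply h3
    rw [← h]
    simp only [det2]
    ring
end
end

section
/- Let (s,x̄) ∈ I × U be such that the vectors c(s,t(s,x̄)) and ∂/∂s(c(s,t(s,x̄))) are linearly independent, and let z ∈ ℝ. Then G(s,x̄) = z and G_s(s,x̄) = 0 hold simultaneously if and only if x̄ = x(s,t(s,x̄)) and z = g(s,t(s,x̄)). (That is, the discriminant set of the family G̃(s,x̄,z) = G(s,x̄) − z coincides with the image of the improper affine map q = (x,g).) -/
noncomputable section

theorem discriminant_eq_image_of_affine_map
    (Ω : Set (ℝ × ℝ)) (hΩ : IsOpen Ω)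
    (A B C D : ℝ × ℝ → ℝ)
    (hA : ContDiffOn ℝ (⊤ : ℕ∞) A Ω) (hB : ContDiffOn ℝ (⊤ : ℕ∞) B Ω)
    (hC : ContDiffOn ℝ (⊤ : ℕ∞) C Ω) (hD : ContDiffOn ℝ (⊤ : ℕ∞) D Ω)
    (hCR1 : ∀ p ∈ Ω, pds A p = - pdt D p)
    (hCR2 : ∀ p ∈ Ω, pdt A p = pds D p)
    (hCR3 : ∀ p ∈ Ω, pds B p = pdt C p)
    (hCR4 : ∀ p ∈ Ω, pdt B p = - pds C p)
    (g : ℝ × ℝ → ℝ) (hg : ContDiffOn ℝ (⊤ : ℕ∞) g Ω)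
    (hgs : ∀ p ∈ Ω, pds g p = det2 (xs A B p) (cmap C D p))
    (hgt : ∀ p ∈ Ω, pdt g p = det2 (xt A B p) (cmap C D p))
    (s₀ t₀ : ℝ) (hst₀ : (s₀, t₀) ∈ Ω)
    (hne₀ : det2 (xt A B (s₀, t₀)) (cmap C D (s₀, t₀)) ≠ 0)
    (I : Set ℝ) (U : Set (ℝ × ℝ)) (hI : IsOpen I) (hU : IsOpen U)
    (hs₀ : s₀ ∈ I) (hx₀ : xmap A B (s₀, t₀) ∈ U)
    (T : ℝ → ℝ × ℝ → ℝ)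
    (hT : ContDiffOn ℝ (⊤ : ℕ∞) (fun q : ℝ × (ℝ × ℝ) => T q.1 q.2) (I ×ˢ U))
    (hT₀ : T s₀ (xmap A B (s₀, t₀)) = t₀)
    (hTmem : ∀ s ∈ I, ∀ xb ∈ U, (s, T s xb) ∈ Ω)
    (hTeq : ∀ s ∈ I, ∀ xb ∈ U,
      det2 (xb - xmap A B (s, T s xb)) (cmap C D (s, T s xb)) = 0)
    (s : ℝ) (xb : ℝ × ℝ) (hs : s ∈ I) (hxb : xb ∈ U)
    (hli : LinearIndependent ℝ
      ![cmap C D (s, T s xb), deriv (fun s' => cmap C D (s', T s' xb)) s])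
    (z : ℝ)
    :
    (g (s, T s xb) = z ∧ deriv (fun s' => g (s', T s' xb)) s = 0) ↔
      (xb = xmap A B (s, T s xb) ∧ z = g (s, T s xb)) := by
  have hp := hTmem s hs xb hxb
  have hTd : DifferentiableAt ℝ (fun s' => T s' xb) s := by
    have h1 : DifferentiableAt ℝ (fun q : ℝ × (ℝ × ℝ) => T q.1 q.2) (s, xb) :=
      (hT.contDiffAt ((hI.prod hU).mem_nhds ⟨hs, hxb⟩)).differentiableAt (by simp)
    have h2 : DifferentiableAt ℝ (fun s' : ℝ => (s', xb)) s := by fun_prop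
    exact DifferentiableAt.comp (g := fun q : ℝ × (ℝ × ℝ) => T q.1 q.2) s h1 h2
  have hγ : HasDerivAt (fun s' => (s', T s' xb)) (1, deriv (fun s' => T s' xb) s) s :=
    (hasDerivAt_id s).prodMk hTd.hasDerivAt
  set τ := deriv (fun s' => T s' xb) s with hτ
  have key : ∀ f : ℝ × ℝ → ℝ, ContDiffOn ℝ (⊤ : ℕ∞) f Ω →
      HasDerivAt (fun s' => f (s', T s' xb))
        (pds f (s, T s xb) + τ * pdt f (s, T s xb)) s := by
    intro f hf
    have h1 : DifferentiableAt ℝ f (s, T s xb) :=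
      (hf.contDiffAt (hΩ.mem_nhds hp)).differentiableAt (by simp)
    have h2 := h1.hasFDerivAt.comp_hasDerivAt (f := fun s' => (s', T s' xb)) s hγ
    have e : ((1 : ℝ), τ) = (1, 0) + τ • ((0 : ℝ), (1 : ℝ)) := by ext <;> simp
    rw [e, map_add, map_smul] at h2
    exact h2
  have kA := key A hA
  have kB := key B hB
  have kC := key C hC
  have kD := key D hD
  have kg := key g hg
  have hc : HasDerivAt (fun s' => cmap C D (s', T s' xb)) _ s := kD.neg.prodMk kC
  rw [hc.deriv] at hli
  rw [kg.deriv, hgs _ hp, hgt _ hp]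
  have hF := ((kA.const_sub xb.1).mul kC).sub ((kB.const_sub xb.2).mul kD.neg)
  have hz : deriv (fun _ : ℝ => (0 : ℝ)) s = 0 := by simp
  have hF0 := (hF.congr_of_eventuallyEq (f₁ := fun _ => (0 : ℝ)) (by
    filter_upwards [hI.mem_nhds hs] with s' hs'
    have := hTeq s' hs' xb hxb
    simpa [det2, xmap, cmap] using this.symm)).deriv
  rw [hz] at hF0
  have h0 := hTeq s hs xb hxb
  rw [LinearIndependent.pair_iff] at hli
  simp only [det2, xmap, cmap, xs, xt, Prod.fst_sub, Prod.snd_sub, Pi.neg_apply] at *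
  generalize pds C (s, T s xb) + τ * pdt C (s, T s xb) = c2 at *
  generalize pds D (s, T s xb) + τ * pdt D (s, T s xb) = d2 at *
  have hdet : -D (s, T s xb) * c2 + C (s, T s xb) * d2 ≠ 0 := by
    intro h
    have a1 := hli c2 (-C (s, T s xb)) (by ext <;> simp <;> linarith)
    have a2 := hli (-d2) (D (s, T s xb)) (by ext <;> simp <;> linarith)
    have a3 := hli 1 1 (by ext <;> simp <;> linarith [a1.1, a1.2, a2.1, a2.2])
    exact one_ne_zero a3.1
  constructor
  · rintro ⟨h1, h2⟩
    have h3 : (xb.1 - A (s, T s xb)) * c2 + (xb.2 - B (s, T s xb)) * d2 = 0 := by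
      linarith
    refine ⟨?_, h1.symm⟩
    ext
    · have : (-D (s, T s xb) * c2 + C (s, T s xb) * d2) * (xb.1 - A (s, T s xb)) = 0 := by
        linear_combination d2 * h0 - D (s, T s xb) * h3
      linarith [(mul_eq_zero.mp this).resolve_left hdet]
    · have : (-D (s, T s xb) * c2 + C (s, T s xb) * d2) * (xb.2 - B (s, T s xb)) = 0 := by
        linear_combination -c2 * h0 + C (s, T s xb) * h3
      linarith [(mul_eq_zero.mp this).resolve_left hdet]
  · rintro ⟨h1, h2⟩
    refine ⟨h2.symm, ?_⟩
    have e1 : xb.1 = A (s, T s xb) := congrArg Prod.fst h1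
    have e2 : xb.2 = B (s, T s xb) := congrArg Prod.snd h1
    linear_combination hF0 + c2 * e1 + d2 * e2
end
end
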